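/- arXiv:1609.03340 — 2 statements merged into one kernel-verified Lean document; each statement's English description precedes it below -/
import Mathlib

section
/- Let η_n → η in Wasserstein-1 distance in the space of probability measures on ℝ with finite first moments, let H_n → ∞, let υ be a finite positive measure, and assume η_n ≤_{c,+} H_n·υ for every n. Then S^{H_n υ}(η_n) → ηP_T in Wasserstein-1 distance, and supp(η) ⊆ [inf T, sup T], where T = supp(υ) and P_T is the Kellerer dilation onto T. -/
open MeasureTheory
open scoped Classical

/-- The support of a measure on a topological space. -/
def msupport {α : Type*} [TopologicalSpace α] [MeasurableSpace α] (μ : Measure α) : Set α :=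
  {x | ∀ U : Set α, IsOpen U → x ∈ U → 0 < μ U}

/-- The Kellerer dilation onto a closed set `T`: the point mass at `x` if `x ∈ T`, and
otherwise the two-point martingale measure on the nearest points of `T` below and above `x`. -/

noncomputable def kellererDilation (T : Set ℝ) (x : ℝ) : Measure ℝ :=
  if x ∈ T then Measure.dirac x
  else
    ENNReal.ofReal ((sInf (T ∩ Set.Ici x) - x) / (sInf (T ∩ Set.Ici x) - sSup (T ∩ Set.Iic x))) •
        Measure.dirac (sSup (T ∩ Set.Iic x)) +
      ENNReal.ofReal ((x - sSup (T ∩ Set.Iic x)) / (sInf (T ∩ Set.Ici x) - sSup (T ∩ Set.Iic x))) •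
        Measure.dirac (sInf (T ∩ Set.Ici x))

open MeasureTheory

/-- Convex order on finite measures: `∫ φ dμ ≤ ∫ φ dν` for every convex `φ` for which
both integrals exist. -/
def ConvexOrder (μ ν : Measure ℝ) : Prop :=
  ∀ φ : ℝ → ℝ, ConvexOn ℝ Set.univ φ → Integrable φ μ → Integrable φ ν →
    ∫ x, φ x ∂μ ≤ ∫ x, φ x ∂ν

/-- `μ ≤_{c,+} ν`: there exists `η` with `μ ≤_c η` and `η ≤ ν` setwise. -/
def ConvexPlusOrder (μ ν : Measure ℝ) : Prop :=
  ∃ η : Measure ℝ, ConvexOrder μ η ∧ η ≤ ν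

/-- `η` is the shadow of `μ` in `ν`: the `≤_c`-smallest measure `η` with `μ ≤_c η`
and `η ≤ ν`. -/
def IsShadow (μ ν η : Measure ℝ) : Prop :=
  ConvexOrder μ η ∧ η ≤ ν ∧
    ∀ η' : Measure ℝ, ConvexOrder μ η' → η' ≤ ν → ConvexOrder η η'

noncomputable def W1 (μ ν : Measure ℝ) : ℝ :=
  ⨆ f : {f : ℝ → ℝ // LipschitzWith 1 f},
    |∫ x, (f : ℝ → ℝ) x ∂μ - ∫ x, (f : ℝ → ℝ) x ∂ν|

section
open Set Filter Topology

/-- right derivative of a real function -/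
noncomputable def sk_rd (g : ℝ → ℝ) (x : ℝ) : ℝ := derivWithin g (Ioi x) x

lemma sk_rd_has {g : ℝ → ℝ} (hg : ConvexOn ℝ univ g) (x : ℝ) :
    HasDerivWithinAt g (sk_rd g x) (Ici x) x := by
  have := hg.hasDerivWithinAt_rightDeriv_of_mem_interior (x := x) (by simp)
  exact hasDerivWithinAt_Ioi_iff_Ici.1 this

lemma sk_rd_mono {g : ℝ → ℝ} (hg : ConvexOn ℝ univ g) : Monotone (sk_rd g) := by
  have := hg.monotoneOn_rightDeriv
  rw [interior_univ] at this
  exact monotoneOn_univ.1 this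

lemma sk_rd_unique {g : ℝ → ℝ} {d x : ℝ} (h : HasDerivWithinAt g d (Ici x) x) :
    sk_rd g x = d :=
  (hasDerivWithinAt_Ioi_iff_Ici.2 h).derivWithin (uniqueDiffWithinAt_Ioi x)

lemma sk_convex_cont {g : ℝ → ℝ} (hg : ConvexOn ℝ univ g) : Continuous g :=
  continuousOn_univ.1 (hg.continuousOn isOpen_univ)

lemma sk_support_line {g : ℝ → ℝ} (hg : ConvexOn ℝ univ g) (x y : ℝ) :
    g x + sk_rd g x * (y - x) ≤ g y := by
  rcases lt_trichotomy x y with h | h | h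
  · have := hg.rightDeriv_le_slope_of_mem_interior (x := x) (y := y) (by simp) (by simp) h
    rw [slope_def_field, le_div_iff₀ (by linarith)] at this
    change sk_rd g x * (y - x) ≤ _ at this
    linarith
  · subst h; simp
  · have h1 := hg.leftDeriv_le_rightDeriv_of_mem_interior (x := x) (by simp)
    have h2 := hg.slope_le_leftDeriv_of_mem_interior (x := y) (y := x) (by simp) (by simp) h
    have h3 := h2.trans h1
    rw [slope_def_field, div_le_iff₀ (by linarith)] at h3
    change _ ≤ sk_rd g x * (x - y) at h3
    linarith

lemma sk_rd_rightcont {g : ℝ → ℝ} (hg : ConvexOn ℝ univ g) (x : ℝ) :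
    ContinuousWithinAt (sk_rd g) (Ici x) x := by
  rw [← continuousWithinAt_Ioi_iff_Ici]
  have hc := sk_convex_cont hg
  have hs : Tendsto (fun y => slope g x y) (𝓝[>] x) (𝓝 (sk_rd g x)) := by
    exact (hasDerivWithinAt_iff_tendsto_slope' (by simp)).1
      (hasDerivWithinAt_Ioi_iff_Ici.2 (sk_rd_has hg x))
  refine tendsto_order.2 ⟨fun a ha => ?_, fun a ha => ?_⟩
  · filter_upwards [self_mem_nhdsWithin] with s hs
    exact ha.trans_le (sk_rd_mono hg (le_of_lt hs))
  · obtain ⟨y, hy, hya⟩ := ((tendsto_order.1 hs).2 a ha |>.and self_mem_nhdsWithin).exists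
    have hya : x < y := hya
    have h1 : Tendsto (fun s => slope g s y) (𝓝[>] x) (𝓝 (slope g x y)) := by
      simp only [slope_def_field]
      refine Tendsto.mono_left ?_ nhdsWithin_le_nhds
      refine Tendsto.div ?_ ?_ (by linarith)
      · exact tendsto_const_nhds.sub hc.continuousAt
      · exact tendsto_const_nhds.sub tendsto_id
    filter_upwards [(tendsto_order.1 h1).2 a hy, Ioo_mem_nhdsGT hya] with s h2 h3
    refine lt_of_le_of_lt ?_ h2
    exact hg.rightDeriv_le_slope_of_mem_interior (x := s) (y := y) (by simp) (by simp) h3.2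

/-- Stieltjes function of the right derivative -/
noncomputable def sk_st (g : ℝ → ℝ) (hg : ConvexOn ℝ univ g) : StieltjesFunction ℝ where
  toFun := sk_rd g
  mono' := sk_rd_mono hg
  right_continuous' := sk_rd_rightcont hg

/-- put function of a measure -/
noncomputable def sk_P (μ : Measure ℝ) (t : ℝ) : ℝ := ∫ x, max (t - x) 0 ∂μ

lemma sk_int_max {μ : Measure ℝ} [IsFiniteMeasure μ] (h : Integrable (fun x : ℝ => x) μ) (t : ℝ) :
    Integrable (fun x => max (t - x) 0) μ :=
  ((integrable_const t).sub h).sup (integrable_const 0)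

lemma sk_P_nonneg (μ : Measure ℝ) (t : ℝ) : 0 ≤ sk_P μ t :=
  integral_nonneg fun _ => le_max_right _ _

lemma sk_P_convex {μ : Measure ℝ} [IsFiniteMeasure μ] (h : Integrable (fun x : ℝ => x) μ) :
    ConvexOn ℝ univ (sk_P μ) := by
  refine ⟨convex_univ, fun x _ y _ a b ha hb hab => ?_⟩
  simp only [sk_P, smul_eq_mul]
  rw [← integral_const_mul, ← integral_const_mul, ← integral_add]
  · refine integral_mono (sk_int_max h _) (((sk_int_max h _).const_mul a).add
      ((sk_int_max h _).const_mul b)) fun z => ?_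
    refine max_le ?_ (by positivity)
    have h1 := mul_le_mul_of_nonneg_left (le_max_left (x - z) 0) ha
    have h2 := mul_le_mul_of_nonneg_left (le_max_left (y - z) 0) hb
    have : z = a * z + b * z := by rw [← add_mul, hab, one_mul]
    simp only
    linarith
  · exact (sk_int_max h _).const_mul a
  · exact (sk_int_max h _).const_mul b

lemma sk_P_lip {μ : Measure ℝ} [IsProbabilityMeasure μ] (h : Integrable (fun x : ℝ => x) μ)
    (s t : ℝ) : sk_P μ s ≤ sk_P μ t + |s - t| := by
  have : ∫ x, (max (t - x) 0 + |s - t|) ∂μ = sk_P μ t + |s - t| := by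
    rw [integral_add (sk_int_max h t) (integrable_const _)]
    simp [sk_P]
  rw [← this]
  refine integral_mono (sk_int_max h _) ((sk_int_max h _).add (integrable_const _)) fun x => ?_
  refine max_le ?_ (add_nonneg (le_max_right _ _) (abs_nonneg _))
  have h1 := le_max_left (t - x) 0
  have h2 := le_abs_self (s - t)
  linarith

lemma sk_P_rd {μ : Measure ℝ} [IsFiniteMeasure μ] (h : Integrable (fun x : ℝ => x) μ) (t : ℝ) :
    HasDerivWithinAt (sk_P μ) (μ.real (Iic t)) (Ici t) t := by
  rw [← hasDerivWithinAt_Ioi_iff_Ici, hasDerivWithinAt_iff_tendsto_slope' (by simp)]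
  have key : ∀ s, t < s → μ.real (Iic t) ≤ slope (sk_P μ) t s ∧
      slope (sk_P μ) t s ≤ μ.real (Iic s) := by
    intro s hs
    have e : ∀ u, ∫ x, (Iic u).indicator (fun _ => (s - t)) x ∂μ = (s - t) * μ.real (Iic u) := by
      intro u
      rw [integral_indicator measurableSet_Iic]; simp [mul_comm]
    have ei : ∀ u, Integrable ((Iic u).indicator (fun _ : ℝ => (s - t))) μ := fun u =>
      (integrable_const _).indicator measurableSet_Iic
    have hd : sk_P μ s - sk_P μ t = ∫ x, (max (s - x) 0 - max (t - x) 0) ∂μ := by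
      rw [integral_sub (sk_int_max h _) (sk_int_max h _)]; rfl
    rw [slope_def_field, le_div_iff₀ (by linarith), div_le_iff₀ (by linarith), hd,
      mul_comm, ← e, mul_comm, ← e]
    constructor
    · refine integral_mono (ei t) ((sk_int_max h _).sub (sk_int_max h _)) fun x => ?_
      by_cases hx : x ≤ t
      · simp only [indicator, mem_Iic, hx, if_true]
        rw [max_eq_left (by linarith), max_eq_left (by linarith)]; linarith
      · simp only [indicator, mem_Iic, hx, if_false]
        push Not at hx
        rw [max_eq_right (by linarith : t - x ≤ 0)]; simp
    · refine integral_mono ((sk_int_max h _).sub (sk_int_max h _)) (ei s) fun x => ?_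
      by_cases hx : x ≤ s
      · simp only [indicator, mem_Iic, hx, if_true]
        rw [max_eq_left (by linarith)]
        have := le_max_left (t - x) 0
        linarith
      · simp only [indicator, mem_Iic, hx, if_false]
        push Not at hx
        rw [max_eq_right (by linarith : t - x ≤ 0), max_eq_right (by linarith : s - x ≤ 0)]; simp
  have hr : Tendsto (fun s => μ.real (Iic s)) (𝓝[>] t) (𝓝 (μ.real (Iic t))) := by
    have h1 : Tendsto (fun s => μ (Iic s)) (𝓝[>] t) (𝓝 (μ (Iic t))) := by
      have := tendsto_measure_biInter_gt (μ := μ) (s := fun s => Iic s) (a := t)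
        (fun r _ => measurableSet_Iic.nullMeasurableSet) (fun i j _ hij => Iic_subset_Iic.2 hij)
        ⟨t + 1, by simp, measure_ne_top _ _⟩
      have e : (⋂ r, ⋂ (_ : r > t), Iic r) = Iic t := by
        ext x; simp only [mem_iInter, mem_Iic]
        exact ⟨fun hh => le_of_forall_gt_imp_ge_of_dense hh, fun hh r hr => hh.trans hr.le⟩
      rwa [e] at this
    exact (ENNReal.tendsto_toReal (measure_ne_top _ _)).comp h1
  refine tendsto_of_tendsto_of_tendsto_of_le_of_le' tendsto_const_nhds hr ?_ ?_
  · filter_upwards [self_mem_nhdsWithin] with s hs using (key s hs).1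
  · filter_upwards [self_mem_nhdsWithin] with s hs using (key s hs).2

/-- two convex-type functions with the same right derivative agree -/
lemma sk_eq_of_rd {f g : ℝ → ℝ} {d : ℝ → ℝ} (hf : Continuous f) (hg : Continuous g) {a b : ℝ}
    (hfd : ∀ x ∈ Ico a b, HasDerivWithinAt f (d x) (Ici x) x)
    (hgd : ∀ x ∈ Ico a b, HasDerivWithinAt g (d x) (Ici x) x) (hab : a ≤ b) :
    f b - g b = f a - g a := by
  have := constant_of_has_deriv_right_zero (f := fun x => f x - g x) (a := a) (b := b)
    (hf.sub hg).continuousOn (fun x hx => by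
      have := (hfd x hx).sub (hgd x hx)
      rw [sub_self] at this
      exact this) b
    (right_mem_Icc.2 hab)
  exact this

lemma sk_st_key {g : ℝ → ℝ} (hg : ConvexOn ℝ univ g) {a b : ℝ} (hab : a ≤ b) :
    Integrable (fun t => t) ((sk_st g hg).measure.restrict (Ioc a b)) ∧
    ∫ t in Ioc a b, (b - t) ∂(sk_st g hg).measure = g b - g a - sk_rd g a * (b - a) := by
  set m := (sk_st g hg).measure.restrict (Ioc a b) with hm
  have : IsFiniteMeasure m := ⟨by simp [hm, StieltjesFunction.measure_Ioc]⟩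
  have hae : ∀ᵐ t ∂m, t ∈ Ioc a b := ae_restrict_mem measurableSet_Ioc
  have hi : Integrable (fun t : ℝ => t) m := by
    refine Integrable.of_bound (C := max |a| |b|) measurable_id.aestronglyMeasurable ?_
    filter_upwards [hae] with t ht
    exact abs_le_max_abs_abs ht.1.le ht.2
  refine ⟨hi, ?_⟩
  have h1 : ∫ t, (b - t) ∂m = sk_P m b := by
    refine integral_congr_ae ?_
    filter_upwards [hae] with t ht
    rw [max_eq_left (by linarith [ht.2])]
  have h0 : sk_P m a = 0 := by
    refine integral_eq_zero_of_ae ?_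
    filter_upwards [hae] with t ht
    simp [ht.1.le]
  rw [h1]
  have hPc := sk_convex_cont (sk_P_convex hi)
  have hgc := sk_convex_cont hg
  have := sk_eq_of_rd (f := fun x => sk_P m x + sk_rd g a * x) (g := g) (d := sk_rd g)
    (hPc.add (continuous_const.mul continuous_id)) hgc (a := a) (b := b) (fun x hx => ?_)
    (fun x hx => sk_rd_has hg x) hab
  · linarith
  · have h2 := (sk_P_rd hi x).add (((hasDerivAt_id x).const_mul (sk_rd g a)).hasDerivWithinAt
      (s := Ici x))
    have h3 : m.real (Iic x) = sk_rd g x - sk_rd g a := by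
      rw [hm, measureReal_restrict_apply measurableSet_Iic]
      have : Iic x ∩ Ioc a b = Ioc a x := by
        ext y; simp only [mem_inter_iff, mem_Iic, mem_Ioc]
        constructor
        · rintro ⟨h, h', _⟩; exact ⟨h', h⟩
        · rintro ⟨h, h'⟩; exact ⟨h', h, h'.trans hx.2.le⟩
      rw [this, Measure.real, StieltjesFunction.measure_Ioc, ENNReal.toReal_ofReal]
      · rfl
      · exact sub_nonneg.2 (sk_rd_mono hg hx.1)
    rw [h3] at h2
    have e : sk_rd g x - sk_rd g a + sk_rd g a * 1 = sk_rd g x := by ring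
    rw [e] at h2
    exact h2
end

section
open Set Filter Topology

lemma sk_int_max' {μ : Measure ℝ} [IsFiniteMeasure μ] (h : Integrable (fun x : ℝ => x) μ) (t : ℝ) :
    Integrable (fun x => max (x - t) 0) μ :=
  (h.sub (integrable_const t)).sup (integrable_const 0)

lemma sk_call {μ : Measure ℝ} [IsFiniteMeasure μ] (h : Integrable (fun x : ℝ => x) μ) (t : ℝ) :
    ∫ x, max (x - t) 0 ∂μ = sk_P μ t + ∫ x, x ∂μ - μ.real univ * t := by
  have : ∀ x : ℝ, max (x - t) 0 = max (t - x) 0 + x - t := by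
    intro x
    rcases le_total x t with hx | hx
    · rw [max_eq_right (by linarith), max_eq_left (by linarith)]; ring
    · rw [max_eq_left (by linarith), max_eq_right (by linarith)]; ring
  simp_rw [this]
  rw [integral_sub (by exact (sk_int_max h t).add h) (integrable_const _),
    integral_add (sk_int_max h t) h]
  simp [sk_P]

/-- kernel of the integral representation -/
noncomputable def sk_k (x t : ℝ) : ℝ := if 0 < t then max (x - t) 0 else max (t - x) 0

lemma sk_k_meas : Measurable (fun p : ℝ × ℝ => ENNReal.ofReal (sk_k p.1 p.2)) := by
  unfold sk_k
  refine ENNReal.measurable_ofReal.comp (Measurable.ite ?_ ?_ ?_)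
  · exact measurableSet_lt measurable_const measurable_snd
  · fun_prop
  · fun_prop

lemma sk_rep {g : ℝ → ℝ} (hg : ConvexOn ℝ univ g) (x : ℝ) :
    ∫⁻ t, ENNReal.ofReal (sk_k x t) ∂(sk_st g hg).measure =
      ENNReal.ofReal (g x - g 0 - sk_rd g 0 * x) := by
  rcases le_total 0 x with hx | hx
  · obtain ⟨h1, h2⟩ := sk_st_key hg hx
    have : IsFiniteMeasure ((sk_st g hg).measure.restrict (Ioc 0 x)) :=
      ⟨by simp [StieltjesFunction.measure_Ioc]⟩
    have e : (fun t => ENNReal.ofReal (sk_k x t)) =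
        (Ioc 0 x).indicator (fun t => ENNReal.ofReal (x - t)) := by
      ext t
      by_cases h0 : 0 < t
      · by_cases ht : t ≤ x
        · rw [indicator_of_mem (by exact ⟨h0, ht⟩), sk_k, if_pos h0, max_eq_left (by linarith)]
        · rw [indicator_of_notMem (by simp [ht]), sk_k, if_pos h0,
            max_eq_right (by linarith), ENNReal.ofReal_zero]
      · rw [indicator_of_notMem (by simp [h0]), sk_k, if_neg h0,
            max_eq_right (by linarith), ENNReal.ofReal_zero]
    rw [e, lintegral_indicator measurableSet_Ioc, ← ofReal_integral_eq_lintegral_ofReal, h2]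
    · congr 1; ring
    · exact (integrable_const _).sub h1
    · filter_upwards [ae_restrict_mem measurableSet_Ioc] with t ht
      simpa using ht.2
  · obtain ⟨h1, h2⟩ := sk_st_key hg hx
    have : IsFiniteMeasure ((sk_st g hg).measure.restrict (Ioc x 0)) :=
      ⟨by simp [StieltjesFunction.measure_Ioc]⟩
    have e : (fun t => ENNReal.ofReal (sk_k x t)) =
        (Ioc x 0).indicator (fun t => ENNReal.ofReal (t - x)) := by
      ext t
      by_cases h0 : 0 < t
      · rw [indicator_of_notMem (by simp [h0]), sk_k, if_pos h0,
            max_eq_right (by linarith), ENNReal.ofReal_zero]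
      · push Not at h0
        by_cases ht : x < t
        · rw [indicator_of_mem (by exact ⟨ht, h0⟩), sk_k, if_neg (by linarith),
            max_eq_left (by linarith)]
        · rw [indicator_of_notMem (by simp [ht]), sk_k, if_neg (by linarith),
            max_eq_right (by linarith), ENNReal.ofReal_zero]
    have hmass : ((sk_st g hg).measure.restrict (Ioc x 0)).real univ = sk_rd g 0 - sk_rd g x := by
      rw [Measure.real, Measure.restrict_apply_univ, StieltjesFunction.measure_Ioc,
        ENNReal.toReal_ofReal]
      · rfl
      · exact sub_nonneg.2 (sk_rd_mono hg hx)
    have h3 : ∫ t in Ioc x 0, (t - x) ∂(sk_st g hg).measure = g x - g 0 - sk_rd g 0 * x := by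
      have e1 : ∀ t : ℝ, t - x = -(0 - t) - x := fun t => by ring
      rw [integral_congr_ae (Eventually.of_forall e1)]
      rw [integral_sub (by exact ((integrable_const _).sub h1).neg) (integrable_const _),
        integral_neg, h2]
      simp only [integral_const, smul_eq_mul, hmass]
      ring
    rw [e, lintegral_indicator measurableSet_Ioc, ← ofReal_integral_eq_lintegral_ofReal, h3]
    · exact h1.sub (integrable_const _)
    · filter_upwards [ae_restrict_mem measurableSet_Ioc] with t ht
      simpa using ht.1.le

lemma sk_convexOrder {μ ν : Measure ℝ} [IsFiniteMeasure μ] [IsFiniteMeasure ν]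
    (hμ : Integrable (fun x : ℝ => x) μ) (hν : Integrable (fun x : ℝ => x) ν)
    (hmass : μ.real univ = ν.real univ) (hmean : ∫ x, x ∂μ = ∫ x, x ∂ν)
    (hP : ∀ t, sk_P μ t ≤ sk_P ν t) : ConvexOrder μ ν := by
  intro g hg hgμ hgν
  set a := g 0
  set b := sk_rd g 0
  have hnn : ∀ x, 0 ≤ g x - a - b * x := by
    intro x
    have := sk_support_line hg 0 x
    simp only [sub_zero] at this
    simp only [a, b]; linarith
  have hi : ∀ (ρ : Measure ℝ) [IsFiniteMeasure ρ], Integrable (fun x : ℝ => x) ρ →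
      Integrable g ρ → Integrable (fun x => g x - a - b * x) ρ := fun ρ _ h1 h2 =>
    (h2.sub (integrable_const _)).sub (h1.const_mul b)
  have hval : ∀ (ρ : Measure ℝ) [IsFiniteMeasure ρ], Integrable (fun x : ℝ => x) ρ →
      Integrable g ρ → ∫ x, (g x - a - b * x) ∂ρ =
        ∫ x, g x ∂ρ - a * ρ.real univ - b * ∫ x, x ∂ρ := by
    intro ρ _ h1 h2
    rw [integral_sub (by exact h2.sub (integrable_const _)) (h1.const_mul b),
      integral_sub h2 (integrable_const _), integral_const_mul]
    simp [mul_comm]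
  have hl : ∀ (ρ : Measure ℝ) [IsFiniteMeasure ρ],
      ∫⁻ x, ENNReal.ofReal (g x - a - b * x) ∂ρ =
        ∫⁻ t, ∫⁻ x, ENNReal.ofReal (sk_k x t) ∂ρ ∂(sk_st g hg).measure := by
    intro ρ _
    rw [lintegral_lintegral_swap (f := fun t x => ENNReal.ofReal (sk_k x t)) (sk_k_meas.comp measurable_swap).aemeasurable]
    exact lintegral_congr fun x => (sk_rep hg x).symm
  have hcmp : ∀ t, ∫⁻ x, ENNReal.ofReal (sk_k x t) ∂μ ≤ ∫⁻ x, ENNReal.ofReal (sk_k x t) ∂ν := by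
    intro t
    by_cases h0 : 0 < t
    · simp only [sk_k, if_pos h0]
      rw [← ofReal_integral_eq_lintegral_ofReal (sk_int_max' hμ t)
        (Eventually.of_forall fun _ => le_max_right _ _),
        ← ofReal_integral_eq_lintegral_ofReal (sk_int_max' hν t)
        (Eventually.of_forall fun _ => le_max_right _ _), sk_call hμ, sk_call hν, hmass, hmean]
      exact ENNReal.ofReal_le_ofReal (by linarith [hP t])
    · simp only [sk_k, if_neg h0]
      rw [← ofReal_integral_eq_lintegral_ofReal (sk_int_max hμ t)
        (Eventually.of_forall fun _ => le_max_right _ _),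
        ← ofReal_integral_eq_lintegral_ofReal (sk_int_max hν t)
        (Eventually.of_forall fun _ => le_max_right _ _)]
      exact ENNReal.ofReal_le_ofReal (hP t)
  have hfin : ∫ x, (g x - a - b * x) ∂μ ≤ ∫ x, (g x - a - b * x) ∂ν := by
    rw [← ENNReal.ofReal_le_ofReal_iff (integral_nonneg hnn),
      ofReal_integral_eq_lintegral_ofReal (hi μ hμ hgμ) (Eventually.of_forall hnn),
      ofReal_integral_eq_lintegral_ofReal (hi ν hν hgν) (Eventually.of_forall hnn), hl, hl]
    exact lintegral_mono hcmp
  rw [hval μ hμ hgμ, hval ν hν hgν, hmass, hmean] at hfin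
  linarith

lemma sk_order_consequences {μ ν : Measure ℝ} [IsFiniteMeasure μ] [IsFiniteMeasure ν]
    (hμ : Integrable (fun x : ℝ => x) μ) (hν : Integrable (fun x : ℝ => x) ν)
    (h : ConvexOrder μ ν) :
    μ.real univ = ν.real univ ∧ ∫ x, x ∂μ = ∫ x, x ∂ν ∧ ∀ t, sk_P μ t ≤ sk_P ν t := by
  refine ⟨?_, ?_, fun t => ?_⟩
  · have h1 := h (fun _ => 1) (convexOn_const _ convex_univ) (integrable_const _)
      (integrable_const _)
    have h2 := h (fun _ => -1) (convexOn_const _ convex_univ) (integrable_const _)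
      (integrable_const _)
    simp at h1 h2
    linarith
  · have h1 := h (fun x => x) (convexOn_id convex_univ) hμ hν
    have h2 := h (fun x => -x) (concaveOn_id convex_univ).neg hμ.neg hν.neg
    rw [integral_neg, integral_neg] at h2
    linarith
  · refine h _ ?_ (sk_int_max hμ t) (sk_int_max hν t)
    have h1 : ConvexOn ℝ univ (fun x : ℝ => t - x) := by
      have := (concaveOn_id (𝕜 := ℝ) (convex_univ (E := ℝ))).neg.add (convexOn_const t convex_univ)
      refine this.congr fun x _ => ?_
      simp; ring
    exact h1.sup (convexOn_const 0 convex_univ)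

lemma sk_P_atBot {μ : Measure ℝ} [IsFiniteMeasure μ] (h : Integrable (fun x : ℝ => x) μ) :
    Tendsto (sk_P μ) atBot (𝓝 0) := by
  have := tendsto_integral_filter_of_dominated_convergence (μ := μ) (l := atBot)
    (F := fun t x => max (t - x) 0) (f := fun _ => (0 : ℝ)) (fun x => |x|)
    (Eventually.of_forall fun t => (sk_int_max h t).aestronglyMeasurable)
    (by
      filter_upwards [eventually_le_atBot (0 : ℝ)] with t ht
      refine Eventually.of_forall fun x => ?_
      rw [Real.norm_eq_abs, abs_of_nonneg (le_max_right _ _)]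
      exact max_le (by linarith [neg_le_abs x]) (abs_nonneg x)) h.abs
    (Eventually.of_forall fun x => by
      refine tendsto_const_nhds.congr' ?_
      filter_upwards [eventually_le_atBot x] with t ht
      rw [max_eq_right (by linarith)])
  simp only [integral_zero] at this
  exact this

lemma sk_P_atTop {μ : Measure ℝ} [IsFiniteMeasure μ] (h : Integrable (fun x : ℝ => x) μ) :
    Tendsto (fun t => sk_P μ t + ∫ x, x ∂μ - μ.real univ * t) atTop (𝓝 0) := by
  have := tendsto_integral_filter_of_dominated_convergence (μ := μ) (l := atTop)
    (F := fun t x => max (x - t) 0) (f := fun _ => (0 : ℝ)) (fun x => |x|)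
    (Eventually.of_forall fun t => (sk_int_max' h t).aestronglyMeasurable)
    (by
      filter_upwards [eventually_ge_atTop (0 : ℝ)] with t ht
      refine Eventually.of_forall fun x => ?_
      rw [Real.norm_eq_abs, abs_of_nonneg (le_max_right _ _)]
      exact max_le (by linarith [le_abs_self x]) (abs_nonneg x)) h.abs
    (Eventually.of_forall fun x => by
      refine tendsto_const_nhds.congr' ?_
      filter_upwards [eventually_ge_atTop x] with t ht
      rw [max_eq_right (by linarith)])
  simp only [integral_zero] at this
  refine this.congr fun t => sk_call h t

lemma sk_affine_zero {c k : ℝ} {l : Filter ℝ} [l.NeBot] (hl : Tendsto (fun t => t + 1) l l)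
    (h : Tendsto (fun t => c * t + k) l (𝓝 0)) : c = 0 ∧ k = 0 := by
  have h1 := (h.comp hl).sub h
  have h2 : c = 0 := by
    refine tendsto_nhds_unique (f := fun _ => c) tendsto_const_nhds ?_ (l := l)
    rw [sub_zero] at h1
    refine h1.congr fun t => ?_
    simp only [Function.comp]; ring
  subst h2
  refine ⟨rfl, ?_⟩
  simp only [zero_mul, zero_add] at h
  exact tendsto_nhds_unique tendsto_const_nhds h

lemma sk_local_convex {W p : ℝ → ℝ} (hW : Continuous W) (hp : ConvexOn ℝ univ p)
    (hpW : ∀ x, p x ≤ W x)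
    (hloc : ∀ x, p x < W x → ∃ r > 0, ∀ r', 0 < r' → r' ≤ r →
      2 * W x ≤ W (x - r') + W (x + r')) : ConvexOn ℝ univ W := by
  refine LinearOrder.convexOn_of_lt convex_univ fun y _ z _ hyz a b ha hb hab => ?_
  simp only [smul_eq_mul]
  by_contra! hcon
  set d := (W z - W y) / (z - y) with hd
  have hdz : d * (z - y) = W z - W y := by
    rw [hd]; field_simp [sub_ne_zero.2 hyz.ne']
  set D : ℝ → ℝ := fun u => W u - (W y + d * (u - y)) with hD
  have hDc : Continuous D := by fun_prop
  obtain ⟨m, hm, hmax⟩ := isCompact_Icc.exists_isMaxOn (nonempty_Icc.2 hyz.le) hDc.continuousOn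
  set M := D m with hM
  have hDy : D y = 0 := by simp [hD]
  have hDz : D z = 0 := by simp only [hD]; linarith
  have hb' : b = 1 - a := by linarith
  have hMpos : 0 < M := by
    have hx : a * y + b * z ∈ Icc y z := by
      subst hb'
      constructor <;> nlinarith
    have h1 : D (a * y + b * z) ≤ M := hmax hx
    have h2 : 0 < D (a * y + b * z) := by
      simp only [hD]
      have : W y + d * (a * y + b * z - y) = a * W y + b * W z := by
        subst hb'
        linear_combination (1 - a) * hdz
      linarith
    linarith
  have hK : IsCompact (Icc y z ∩ D ⁻¹' {M}) :=
    isCompact_Icc.inter_right (isClosed_singleton.preimage hDc)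
  obtain ⟨x, ⟨hxI, hxM⟩, hxl⟩ := hK.exists_isLeast ⟨m, hm, rfl⟩
  have hxM : D x = M := hxM
  have hyx : y < x := by
    rcases hxI.1.eq_or_lt with h | h
    · rw [← h, hDy] at hxM; linarith
    · exact h
  have hxz : x < z := by
    rcases hxI.2.eq_or_lt with h | h
    · rw [h, hDz] at hxM; linarith
    · exact h
  rcases (hpW x).eq_or_lt with h | h
  · have hp2 := hp.2
    have h1 := hp2 (mem_univ y) (mem_univ z)
      (div_nonneg (by linarith) (by linarith) : 0 ≤ (z - x) / (z - y))
      (div_nonneg (by linarith) (by linarith) : 0 ≤ (x - y) / (z - y))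
      (by rw [← add_div]; rw [div_eq_one_iff_eq (by linarith)]; ring)
    have h2 : ((z - x) / (z - y)) • y + ((x - y) / (z - y)) • z = x := by
      have : z - y ≠ 0 := by linarith
      simp only [smul_eq_mul]; field_simp; ring
    rw [h2] at h1
    simp only [smul_eq_mul] at h1
    have h3 : ((z - x) / (z - y)) * W y + ((x - y) / (z - y)) * W z = W y + d * (x - y) := by
      have : z - y ≠ 0 := by linarith
      rw [hd]; field_simp; ring
    have h4 := mul_le_mul_of_nonneg_left (hpW y) (div_nonneg (by linarith) (by linarith) :
      0 ≤ (z - x) / (z - y))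
    have h5 := mul_le_mul_of_nonneg_left (hpW z) (div_nonneg (by linarith) (by linarith) :
      0 ≤ (x - y) / (z - y))
    simp only [hD] at hxM
    linarith
  · obtain ⟨r, hr, hloc⟩ := hloc x h
    set r' := min r (min (x - y) (z - x)) with hr'
    have hr0 : 0 < r' := lt_min hr (lt_min (by linarith) (by linarith))
    have h1 := hloc r' hr0 (min_le_left _ _)
    have hry : r' ≤ x - y := (min_le_right _ _).trans (min_le_left _ _)
    have hrz : r' ≤ z - x := (min_le_right _ _).trans (min_le_right _ _)
    have i1 : x - r' ∈ Icc y z := ⟨by linarith, by linarith⟩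
    have i2 : x + r' ∈ Icc y z := ⟨by linarith, by linarith⟩
    have j1 : D (x - r') ≤ M := hmax i1
    have j2 : D (x + r') ≤ M := hmax i2
    have j3 : D (x - r') ≠ M := fun hh => by
      have := hxl ⟨i1, hh⟩
      linarith
    have j4 := lt_of_le_of_ne j1 j3
    simp only [hD] at hxM j4 j2
    nlinarith
end

section
open Set Filter Topology

/-- convex hull of a function (supremum of affine minorants) -/
noncomputable def sk_C (f : ℝ → ℝ) (t : ℝ) : ℝ :=
  sSup {v | ∃ a b : ℝ, (∀ s, a + b * s ≤ f s) ∧ v = a + b * t}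

lemma sk_C_ge {f : ℝ → ℝ} {a b : ℝ} (h : ∀ s, a + b * s ≤ f s) (t : ℝ) : a + b * t ≤ sk_C f t :=
  le_csSup ⟨f t, by rintro v ⟨a, b, h, rfl⟩; exact h t⟩ ⟨a, b, h, rfl⟩

lemma sk_C_ge_convex {f F : ℝ → ℝ} (hF : ConvexOn ℝ univ F) (hFf : ∀ s, F s ≤ f s) (t : ℝ) :
    F t ≤ sk_C f t := by
  have := sk_C_ge (f := f) (a := F t - sk_rd F t * t) (b := sk_rd F t)
    (fun s => le_trans (by linarith [sk_support_line hF t s]) (hFf s)) t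
  linarith

lemma sk_C_le {f F : ℝ → ℝ} (hF : ConvexOn ℝ univ F) (hFf : ∀ s, F s ≤ f s) {t c : ℝ}
    (h : ∀ a b : ℝ, (∀ s, a + b * s ≤ f s) → a + b * t ≤ c) : sk_C f t ≤ c := by
  refine csSup_le ?_ ?_
  · exact ⟨_, F t - sk_rd F t * t, sk_rd F t,
      (fun s => le_trans (by linarith [sk_support_line hF t s]) (hFf s)), rfl⟩
  · rintro v ⟨a, b, h', rfl⟩; exact h a b h'

lemma sk_C_convex {f F : ℝ → ℝ} (hF : ConvexOn ℝ univ F) (hFf : ∀ s, F s ≤ f s) :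
    ConvexOn ℝ univ (sk_C f) := by
  refine ⟨convex_univ, fun x _ y _ a b ha hb hab => ?_⟩
  simp only [smul_eq_mul]
  refine sk_C_le hF hFf fun c d h => ?_
  have h1 := mul_le_mul_of_nonneg_left (sk_C_ge h x) ha
  have h2 := mul_le_mul_of_nonneg_left (sk_C_ge h y) hb
  have : c = a * c + b * c := by rw [← add_mul, hab, one_mul]
  linarith

lemma sk_C_local {f F : ℝ → ℝ} (hf : Continuous f) (hF : ConvexOn ℝ univ F)
    (hFf : ∀ s, F s ≤ f s) {x : ℝ} (hx : sk_C f x < f x) :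
    ∃ r > 0, ∀ r', 0 < r' → r' ≤ r → sk_C f (x - r') + sk_C f (x + r') ≤ 2 * sk_C f x := by
  have hC := sk_C_convex hF hFf
  have hCc := sk_convex_cont hC
  have hCf : ∀ s, sk_C f s ≤ f s := fun s => sk_C_le hF hFf fun a b h => h s
  obtain ⟨c, hc1, hc2⟩ := exists_between hx
  have e1 : ∀ᶠ u in 𝓝 x, sk_C f u < c := hCc.continuousAt.eventually_lt_const hc1
  have e2 : ∀ᶠ u in 𝓝 x, c < f u := hf.continuousAt.eventually_const_lt hc2
  obtain ⟨ε, hε, hb⟩ := Metric.eventually_nhds_iff.1 (e1.and e2)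
  refine ⟨ε / 2, by positivity, fun r hr hrε => ?_⟩
  set A := sk_C f (x - r) with hA
  set B := sk_C f (x + r) with hB
  have hAc : A < c := (hb (y := x - r) (by rw [Real.dist_eq]; rw [abs_lt]; constructor <;> linarith)).1
  have hBc : B < c := (hb (y := x + r) (by rw [Real.dist_eq]; rw [abs_lt]; constructor <;> linarith)).1
  set k := (B - A) / (2 * r) with hk
  have hkr : k * (2 * r) = B - A := by rw [hk]; field_simp
  have key : ∀ s, ((A + B) / 2 - k * x) + k * s ≤ f s := by
    intro s
    rcases lt_or_ge s (x - r) with h | h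
    · refine le_trans ?_ (hCf s)
      have := hC.slope_mono_adjacent (mem_univ s) (mem_univ (x + r)) h (by linarith : x - r < x + r)
      rw [← hA, ← hB, show x + r - (x - r) = 2 * r by ring, ← hk, div_le_iff₀ (by linarith)] at this
      linarith
    rcases lt_or_ge (x + r) s with h' | h'
    · refine le_trans ?_ (hCf s)
      have := hC.slope_mono_adjacent (mem_univ (x - r)) (mem_univ s) (by linarith : x - r < x + r) h'
      rw [← hA, ← hB, show x + r - (x - r) = 2 * r by ring, ← hk, le_div_iff₀ (by linarith)] at this
      linarith
    · have h1 : c < f s := (hb (y := s) (by rw [Real.dist_eq, abs_lt]; constructor <;> linarith)).2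
      refine le_trans ?_ h1.le
      rcases le_total 0 k with hk0 | hk0
      · have := mul_le_mul_of_nonneg_left (by linarith : s - x ≤ r) hk0
        linarith
      · have := mul_le_mul_of_nonpos_left (by linarith : -r ≤ s - x) hk0
        linarith
  have := sk_C_ge key x
  linarith

lemma sk_st_P {μ : Measure ℝ} [IsFiniteMeasure μ] (h : Integrable (fun x : ℝ => x) μ) :
    (sk_st (sk_P μ) (sk_P_convex h)).measure = μ := by
  refine Measure.ext_of_Ioc _ _ fun a b hab => ?_
  rw [StieltjesFunction.measure_Ioc]
  change ENNReal.ofReal (sk_rd (sk_P μ) b - sk_rd (sk_P μ) a) = _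
  rw [sk_rd_unique (sk_P_rd h b), sk_rd_unique (sk_P_rd h a)]
  have : μ.real (Iic b) = μ.real (Iic a) + μ.real (Ioc a b) := by
    rw [← measureReal_union _ measurableSet_Ioc, Iic_union_Ioc_eq_Iic hab.le]
    exact Set.disjoint_left.2 fun x hx hx' => absurd hx'.1 (not_lt.2 hx)
  rw [this, add_sub_cancel_left, ofReal_measureReal]

lemma sk_int_le {μ ν : Measure ℝ} (h : μ ≤ ν) (hν : Integrable (fun x : ℝ => x) ν) :
    Integrable (fun x : ℝ => x) μ := hν.mono_measure h

lemma sk_add_conv {μ ν : Measure ℝ} [IsFiniteMeasure ν] (h : μ ≤ ν)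
    (hν : Integrable (fun x : ℝ => x) ν) :
    ConvexOn ℝ univ (fun t => sk_P ν t - sk_P μ t) := by
  have hf : IsFiniteMeasure μ := isFiniteMeasure_of_le ν h
  have hs : ν = μ + (ν - μ) := by rw [add_comm]; exact (Measure.sub_add_cancel_of_le h).symm
  have h2 : ν - μ ≤ ν := Measure.sub_le
  have hi2 := sk_int_le h2 hν
  have : (fun t => sk_P ν t - sk_P μ t) = sk_P (ν - μ) := by
    ext t
    have e : sk_P ν t = sk_P μ t + sk_P (ν - μ) t := by
      conv_lhs => rw [hs]
      exact integral_add_measure (sk_int_max (sk_int_le h hν) t) (sk_int_max hi2 t)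
    linarith
  rw [this]
  exact sk_P_convex hi2

lemma sk_competitor {ν η S : Measure ℝ} [IsFiniteMeasure ν] [IsProbabilityMeasure η]
    (hν : Integrable (fun x : ℝ => x) ν) (hη : Integrable (fun x : ℝ => x) η)
    (hηS : ConvexOrder η S) (hSν : S ≤ ν) :
    ∃ S' : Measure ℝ, ConvexOrder η S' ∧ S' ≤ ν ∧ ∀ a b : ℝ,
      (∀ s, a + b * s ≤ sk_P ν s - sk_P η s) → ∀ t, sk_P S' t ≤ sk_P ν t - (a + b * t) := by
  have hSf : IsFiniteMeasure S := isFiniteMeasure_of_le ν hSν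
  have hSi := sk_int_le hSν hν
  obtain ⟨hmass, hmean, hPP⟩ := sk_order_consequences hη hSi hηS
  set f : ℝ → ℝ := fun t => sk_P ν t - sk_P η t with hf
  have hF := sk_add_conv hSν hν
  have hFf : ∀ s, sk_P ν s - sk_P S s ≤ f s := fun s => by simp only [hf]; linarith [hPP s]
  have hνc := sk_P_convex hν
  have hηc := sk_P_convex hη
  have hfc : Continuous f := (sk_convex_cont hνc).sub (sk_convex_cont hηc)
  have hC := sk_C_convex hF hFf
  have hCf : ∀ s, sk_C f s ≤ f s := fun s => sk_C_le hF hFf fun a b h => h s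
  have hCF := sk_C_ge_convex hF hFf
  set W : ℝ → ℝ := fun t => sk_P ν t - sk_C f t with hW
  have hWη : ∀ t, sk_P η t ≤ W t := fun t => by
    have := hCf t
    simp only [hf] at this
    simp only [hW]; linarith
  have hWS : ∀ t, W t ≤ sk_P S t := fun t => by
    have := hCF t
    simp only [hW]; linarith
  have hWcont : Continuous W := (sk_convex_cont hνc).sub (sk_convex_cont hC)
  have hWc : ConvexOn ℝ univ W := by
    refine sk_local_convex hWcont hηc hWη fun x hx => ?_
    obtain ⟨r, hr, hloc⟩ := sk_C_local hfc hF hFf (x := x) (by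
      simp only [hW] at hx
      simp only [hf]; linarith)
    refine ⟨r, hr, fun r' h0 h1 => ?_⟩
    have h2 := hloc r' h0 h1
    have hν2 := hνc.2
    have h3 := hν2 (mem_univ (x - r')) (mem_univ (x + r')) (by norm_num : (0:ℝ) ≤ 1 / 2)
      (by norm_num : (0:ℝ) ≤ 1 / 2) (by norm_num)
    rw [show (1 / 2 : ℝ) • (x - r') + (1 / 2 : ℝ) • (x + r') = x by
      simp only [smul_eq_mul]; ring] at h3
    simp only [smul_eq_mul] at h3
    simp only [hW]; linarith
  set m := (sk_st W hWc).measure with hm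
  have hsum : sk_st W hWc + sk_st (sk_C f) hC = sk_st (sk_P ν) hνc := by
    ext x
    change sk_rd W x + sk_rd (sk_C f) x = sk_rd (sk_P ν) x
    symm
    apply sk_rd_unique
    have := (sk_rd_has hWc x).add (sk_rd_has hC x)
    have e : W + sk_C f = sk_P ν := by ext t; simp [hW]
    rwa [e] at this
  have hmν : m ≤ ν := by
    rw [← sk_st_P hν, ← hsum, StieltjesFunction.measure_add]
    exact Measure.le_add_right le_rfl
  have hmf : IsFiniteMeasure m := isFiniteMeasure_of_le ν hmν
  have hmi := sk_int_le hmν hν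
  have hmc := sk_convex_cont (sk_P_convex hmi)
  -- the potential of `m` is `W`
  set c := sk_rd W 0 - m.real (Iic 0) with hc
  have hcc : ∀ a b, a ≤ b → sk_rd W b - m.real (Iic b) = sk_rd W a - m.real (Iic a) := by
    intro a b hab
    have h1 : m.real (Iic b) = m.real (Iic a) + m.real (Ioc a b) := by
      rw [← measureReal_union _ measurableSet_Ioc, Iic_union_Ioc_eq_Iic hab]
      exact Set.disjoint_left.2 fun x hx hx' => absurd hx'.1 (not_lt.2 hx)
    have h2 : m.real (Ioc a b) = sk_rd W b - sk_rd W a := by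
      rw [Measure.real, hm, StieltjesFunction.measure_Ioc, ENNReal.toReal_ofReal]
      · rfl
      · exact sub_nonneg.2 (sk_rd_mono hWc hab)
    linarith
  have hcall : ∀ t, sk_rd W t = m.real (Iic t) + c * 1 := by
    intro t
    rcases le_total 0 t with h | h
    · linarith [hcc 0 t h]
    · linarith [hcc t 0 h]
  have hdiff : ∀ a b, a ≤ b → W b - (sk_P m b + c * b) = W a - (sk_P m a + c * a) := by
    intro a b hab
    refine sk_eq_of_rd (f := W) (g := fun x => sk_P m x + c * x) (d := sk_rd W) hWcont
      (hmc.add (continuous_const.mul continuous_id)) (fun x _ => sk_rd_has hWc x)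
      (fun x _ => ?_) hab
    rw [hcall x]
    exact (sk_P_rd hmi x).add (((hasDerivAt_id x).const_mul c).hasDerivWithinAt (s := Ici x))
  set k := W 0 - sk_P m 0 with hk
  have hWm : ∀ t, W t - sk_P m t = c * t + k := by
    intro t
    rcases le_total 0 t with h | h
    · have := hdiff 0 t h
      simp only [mul_zero, add_zero] at this; linarith
    · have := hdiff t 0 h
      simp only [mul_zero, add_zero] at this; linarith
  have hWbot : Tendsto W atBot (𝓝 0) :=
    tendsto_of_tendsto_of_tendsto_of_le_of_le (sk_P_atBot hη) (sk_P_atBot hSi) hWη hWS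
  have hck : c = 0 ∧ k = 0 := by
    refine sk_affine_zero (l := atBot) (tendsto_atBot_add_const_right _ _ tendsto_id) ?_
    have := hWbot.sub (sk_P_atBot hmi)
    rw [sub_zero] at this
    exact this.congr hWm
  have hWm' : ∀ t, sk_P m t = W t := by
    intro t
    have := hWm t
    rw [hck.1, hck.2] at this; linarith
  have htop : Tendsto (fun t => W t + ∫ x, x ∂η - η.real univ * t) atTop (𝓝 0) := by
    refine tendsto_of_tendsto_of_tendsto_of_le_of_le (sk_P_atTop hη) (sk_P_atTop hSi)
      (fun t => ?_) (fun t => ?_)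
    · simp only; linarith [hWη t]
    · simp only; rw [hmass, hmean]; linarith [hWS t]
  have hmm := sk_affine_zero (l := atTop) (c := m.real univ - η.real univ)
    (k := ∫ x, x ∂η - ∫ x, x ∂m)
    (tendsto_atTop_add_const_right _ _ tendsto_id) (by
      have := htop.sub (sk_P_atTop hmi)
      rw [sub_zero] at this
      refine this.congr fun t => ?_
      rw [hWm' t]; ring)
  refine ⟨m, ?_, hmν, fun a b hab t => ?_⟩
  · refine sk_convexOrder hη hmi (by linarith [hmm.1]) (by linarith [hmm.2]) fun t => ?_
    rw [hWm']; exact hWη t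
  · rw [hWm']
    simp only [hW]
    linarith [sk_C_ge (f := f) hab t]
end

section
open Set Filter Topology

lemma sk_key {υ η S : Measure ℝ} [IsFiniteMeasure υ] [IsProbabilityMeasure η] {H : NNReal}
    (hυ : Integrable (fun x : ℝ => x) υ) (hη : Integrable (fun x : ℝ => x) η)
    (hS : IsShadow η ((H : ENNReal) • υ) S) {t δ : ℝ}
    (hc : 2 ≤ (H : ℝ) * υ.real (Ioo (t - δ) (t + δ))) :
    sk_P S t ≤ sk_P η t + 2 * δ := by
  obtain ⟨hηS, hSν, hmin⟩ := hS
  have hνf : IsFiniteMeasure ((H : ENNReal) • υ) := by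
    refine ⟨?_⟩
    rw [Measure.smul_apply, smul_eq_mul]
    exact ENNReal.mul_lt_top ENNReal.coe_lt_top (measure_lt_top _ _)
  have hν : Integrable (fun x : ℝ => x) ((H : ENNReal) • υ) := hυ.smul_measure ENNReal.coe_ne_top
  have hPν : ∀ s, sk_P ((H : ENNReal) • υ) s = H * sk_P υ s := by
    intro s
    simp [sk_P, integral_smul_measure, NNReal.smul_def]
  obtain ⟨S', hηS', hS'ν, hline⟩ := sk_competitor hν hη hηS hSν
  have hSf : IsFiniteMeasure S := isFiniteMeasure_of_le _ hSν
  have hS'f : IsFiniteMeasure S' := isFiniteMeasure_of_le _ hS'ν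
  have hle := (sk_order_consequences (sk_int_le hSν hν) (sk_int_le hS'ν hν)
    (hmin S' hηS' hS'ν)).2.2 t
  refine hle.trans ?_
  set J := Ioo (t - δ) (t + δ) with hJ
  have hJm : MeasurableSet J := measurableSet_Ioo
  set c := υ.real J with hcdef
  set θ : ℝ := 1 / (H * c) with hθ
  have hHc : (0:ℝ) < H * c := by linarith
  have hθ0 : 0 < θ := by positivity
  have hθ1 : θ ≤ 1 / 2 := by
    rw [hθ]; exact one_div_le_one_div_of_le (by norm_num) hc
  have hθc : H * (θ * c) = 1 := by
    rw [hθ, show (H:ℝ) * (1/(H*c) * c) = (H*c)/(H*c) by ring, div_self hHc.ne']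
  set α : ℝ → ℝ := fun x => (Iio t).indicator (fun _ => 1) x +
    J.indicator (fun x => if x < t then -θ else θ) x with hα
  have hαm : Measurable α := by
    refine (measurable_const.indicator measurableSet_Iio).add (Measurable.indicator ?_ hJm)
    exact Measurable.ite measurableSet_Iio measurable_const measurable_const
  have hα01 : ∀ x, 0 ≤ α x ∧ α x ≤ 1 := by
    intro x
    simp only [hα, indicator, mem_Iio]
    split_ifs <;> constructor <;> linarith
  have hαi : Integrable α υ := by
    refine Integrable.of_bound (C := 1) hαm.aestronglyMeasurable (Eventually.of_forall fun x => ?_)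
    rw [Real.norm_eq_abs, abs_le]; constructor <;> linarith [(hα01 x).1, (hα01 x).2]
  have hαxi : Integrable (fun x => α x * x) υ := by
    refine hυ.bdd_mul (c := 1) hαm.aestronglyMeasurable (Eventually.of_forall fun x => ?_)
    rw [Real.norm_eq_abs, abs_le]; constructor <;> linarith [(hα01 x).1, (hα01 x).2]
  set b0 := (H : ℝ) * ∫ x, α x ∂υ with hb0
  set a0 := -((H : ℝ) * ∫ x, α x * x ∂υ) with ha0
  have hgi : ∀ s, Integrable (fun x => max (s - x) 0 - (s * α x - α x * x)) υ := fun s =>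
    (sk_int_max hυ s).sub ((hαi.const_mul s).sub hαxi)
  have hgval : ∀ s, H * sk_P υ s - (a0 + b0 * s) =
      H * ∫ x, (max (s - x) 0 - (s * α x - α x * x)) ∂υ := by
    intro s
    rw [integral_sub (sk_int_max hυ s) (by exact (hαi.const_mul s).sub hαxi),
      integral_sub (hαi.const_mul s) hαxi, integral_const_mul, ha0, hb0]
    simp only [sk_P]; ring
  have hJint : ∀ r : ℝ, ∫ x, J.indicator (fun _ => r) x ∂υ = c * r := by
    intro r
    rw [integral_indicator hJm]; simp [hcdef]
  have hlow : ∀ s, |s - t| - δ ≤ H * sk_P υ s - (a0 + b0 * s) := by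
    intro s
    rw [hgval]
    have h1 : ∫ x, J.indicator (fun _ => θ * (|s - t| - δ)) x ∂υ ≤
        ∫ x, (max (s - x) 0 - (s * α x - α x * x)) ∂υ := by
      refine integral_mono ((integrable_const _).indicator hJm) (hgi s) fun x => ?_
      by_cases hx : x ∈ J
      · simp only [indicator_of_mem hx]
        have hxt : |x - t| ≤ δ := abs_le.2 ⟨by linarith [hx.1], by linarith [hx.2]⟩
        have h2 : |s - t| - δ ≤ |s - x| := by
          have := abs_sub_le s x t
          linarith
        refine (mul_le_mul_of_nonneg_left h2 hθ0.le).trans ?_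
        have hαx : θ ≤ α x ∧ α x ≤ 1 - θ := by
          simp only [hα, indicator_of_mem hx, indicator, mem_Iio]
          split_ifs <;> constructor <;> linarith
        rcases le_total x s with h | h
        · rw [max_eq_left (by linarith), abs_of_nonneg (by linarith)]
          nlinarith [hαx.2]
        · rw [max_eq_right (by linarith), abs_of_nonpos (by linarith)]
          nlinarith [hαx.1]
      · simp only [indicator_of_notMem hx]
        rcases le_total x s with h | h
        · rw [max_eq_left (by linarith)]
          nlinarith [(hα01 x).2]
        · rw [max_eq_right (by linarith)]
          nlinarith [(hα01 x).1]
    rw [hJint] at h1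
    have h2 := mul_le_mul_of_nonneg_left h1 H.coe_nonneg
    calc |s - t| - δ = H * (θ * c) * (|s - t| - δ) := by rw [hθc, one_mul]
      _ = H * (c * (θ * (|s - t| - δ))) := by ring
      _ ≤ _ := h2
  have hup : H * sk_P υ t - (a0 + b0 * t) ≤ δ := by
    rw [hgval]
    have h1 : ∫ x, (max (t - x) 0 - (t * α x - α x * x)) ∂υ ≤
        ∫ x, J.indicator (fun _ => θ * δ) x ∂υ := by
      refine integral_mono (hgi t) ((integrable_const _).indicator hJm) fun x => ?_
      by_cases hx : x ∈ J
      · simp only [indicator_of_mem hx, hα]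
        rcases lt_or_ge x t with h | h
        · rw [max_eq_left (by linarith), if_pos h, indicator_of_mem (by exact h)]
          nlinarith [hx.1]
        · rw [max_eq_right (by linarith), if_neg (by linarith), indicator_of_notMem (by simpa using h)]
          nlinarith [hx.2]
      · simp only [indicator_of_notMem hx, hα]
        rcases lt_or_ge x t with h | h
        · rw [max_eq_left (by linarith), indicator_of_mem (by exact h)]
          linarith
        · rw [max_eq_right (by linarith), indicator_of_notMem (by simpa using h)]
          linarith
    rw [hJint] at h1
    have h2 := mul_le_mul_of_nonneg_left h1 H.coe_nonneg
    calc _ ≤ _ := h2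
      _ = H * (θ * c) * δ := by ring
      _ = δ := by rw [hθc, one_mul]
  have := hline (a0 - sk_P η t - δ) b0 (fun s => by
    rw [hPν]
    have h1 := hlow s
    have h2 := sk_P_lip hη s t
    linarith) t
  rw [hPν] at this
  linarith

/-- the set between points of `T` -/
def sk_A (T : Set ℝ) : Set ℝ := {x | (∃ a ∈ T, a ≤ x) ∧ ∃ b ∈ T, x ≤ b}

lemma sk_msupport_closed (υ : Measure ℝ) : IsClosed (msupport υ) := by
  rw [← isOpen_compl_iff, isOpen_iff_forall_mem_open]
  intro x hx
  simp only [msupport, mem_compl_iff, mem_setOf_eq, not_forall] at hx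
  obtain ⟨U, hU, hxU, h0⟩ := hx
  exact ⟨U, fun y hy hy' => h0 (hy' U hU hy), hU, hxU⟩

lemma sk_msupport_null (υ : Measure ℝ) : υ (msupport υ)ᶜ = 0 := by
  refine measure_null_of_locally_null _ fun x hx => ?_
  simp only [msupport, mem_compl_iff, mem_setOf_eq, not_forall] at hx
  obtain ⟨U, hU, hxU, h0⟩ := hx
  exact ⟨U, mem_nhdsWithin_of_mem_nhds (hU.mem_nhds hxU), by simpa using h0⟩

lemma sk_gap {T : Set ℝ} (hT : IsClosed T) {x : ℝ} (hx : x ∈ sk_A T) (hxT : x ∉ T) :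
    sSup (T ∩ Iic x) ∈ T ∧ sInf (T ∩ Ici x) ∈ T ∧ sSup (T ∩ Iic x) < x ∧ x < sInf (T ∩ Ici x) ∧
    ∀ t ∈ T, t ≤ sSup (T ∩ Iic x) ∨ sInf (T ∩ Ici x) ≤ t := by
  obtain ⟨⟨a, ha, hax⟩, b, hb, hxb⟩ := hx
  have bd1 : BddAbove (T ∩ Iic x) := ⟨x, fun y hy => hy.2⟩
  have bd2 : BddBelow (T ∩ Ici x) := ⟨x, fun y hy => hy.2⟩
  have h1 := (hT.inter isClosed_Iic).csSup_mem ⟨a, ha, hax⟩ bd1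
  have h2 := (hT.inter isClosed_Ici).csInf_mem ⟨b, hb, hxb⟩ bd2
  refine ⟨h1.1, h2.1, lt_of_le_of_ne h1.2 ?_, lt_of_le_of_ne h2.2 ?_, fun t ht => ?_⟩
  · intro h; rw [h] at h1; exact hxT h1.1
  · intro h; rw [← h] at h2; exact hxT h2.1
  · rcases le_total t x with h | h
    · exact Or.inl (le_csSup bd1 ⟨ht, h⟩)
    · exact Or.inr (csInf_le bd2 ⟨ht, h⟩)

lemma sk_A_meas (T : Set ℝ) : MeasurableSet (sk_A T) := by
  refine OrdConnected.measurableSet ⟨?_⟩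
  rintro x ⟨⟨a, ha, hax⟩, -⟩ y ⟨-, b, hb, hyb⟩ z ⟨hz1, hz2⟩
  exact ⟨⟨a, ha, hax.trans hz1⟩, b, hb, hz2.trans hyb⟩

lemma sk_kel_aemeas {T : Set ℝ} (hT : IsClosed T) {η : Measure ℝ} (hη : ∀ᵐ x ∂η, x ∈ sk_A T) :
    AEMeasurable (kellererDilation T) η := by
  have hres : η.restrict (sk_A T) = η := Measure.restrict_eq_self_of_ae_mem hη
  have h1 : AEMeasurable (fun x => sSup (T ∩ Iic x)) η := by
    rw [← hres]
    refine aemeasurable_restrict_of_monotoneOn (sk_A_meas T) ?_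
    rintro x ⟨⟨a, ha, hax⟩, -⟩ y - hxy
    exact csSup_le_csSup ⟨y, fun z hz => hz.2⟩ ⟨a, ha, hax⟩
      (inter_subset_inter_right _ (Iic_subset_Iic.2 hxy))
  have h2 : AEMeasurable (fun x => sInf (T ∩ Ici x)) η := by
    rw [← hres]
    refine aemeasurable_restrict_of_monotoneOn (sk_A_meas T) ?_
    rintro x - y ⟨-, b, hb, hyb⟩ hxy
    exact csInf_le_csInf ⟨x, fun z hz => hz.2⟩ ⟨b, hb, hyb⟩
      (inter_subset_inter_right _ (Ici_subset_Ici.2 hxy))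
  let G : ℝ × ℝ × ℝ → Measure ℝ := fun p => if p.1 ∈ T then Measure.dirac p.1 else
    ENNReal.ofReal ((p.2.2 - p.1) / (p.2.2 - p.2.1)) • Measure.dirac p.2.1 +
    ENNReal.ofReal ((p.1 - p.2.1) / (p.2.2 - p.2.1)) • Measure.dirac p.2.2
  have hG : Measurable G := by
    refine Measurable.ite (measurable_fst hT.measurableSet)
      (Measure.measurable_dirac.comp measurable_fst) ?_
    refine Measure.measurable_of_measurable_coe _ fun s hs => ?_
    simp only [Measure.add_apply, Measure.smul_apply, smul_eq_mul]
    have hd : Measurable (fun x : ℝ => Measure.dirac x s) :=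
      (Measure.measurable_coe hs).comp Measure.measurable_dirac
    refine Measurable.add (Measurable.mul (by fun_prop) (hd.comp (by fun_prop)))
      (Measurable.mul (by fun_prop) (hd.comp (by fun_prop)))
  exact hG.comp_aemeasurable (aemeasurable_id.prodMk (h1.prodMk h2))

lemma sk_kel_lintegral {T : Set ℝ} (hT : IsClosed T) {x : ℝ} (hx : x ∈ sk_A T) {f : ℝ → ℝ}
    (hf : Measurable f) (hf0 : ∀ y, 0 ≤ f y)
    (hlin : ∀ l u, l ∈ T → u ∈ T → l < x → x < u → (∀ t ∈ T, t ≤ l ∨ u ≤ t) →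
      (u - x) / (u - l) * f l + (x - l) / (u - l) * f u = f x) :
    ∫⁻ y, ENNReal.ofReal (f y) ∂(kellererDilation T x) = ENNReal.ofReal (f x) := by
  have hm : Measurable fun y => ENNReal.ofReal (f y) := hf.ennreal_ofReal
  by_cases hxT : x ∈ T
  · rw [kellererDilation, if_pos hxT, lintegral_dirac' _ hm]
  · obtain ⟨h1, h2, h3, h4, h5⟩ := sk_gap hT hx hxT
    rw [kellererDilation, if_neg hxT, lintegral_add_measure, lintegral_smul_measure,
      lintegral_smul_measure, lintegral_dirac' _ hm, lintegral_dirac' _ hm]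
    have p1 := div_nonneg (by linarith : 0 ≤ sInf (T ∩ Ici x) - x)
      (by linarith : 0 ≤ sInf (T ∩ Ici x) - sSup (T ∩ Iic x))
    have p2 := div_nonneg (by linarith : 0 ≤ x - sSup (T ∩ Iic x))
      (by linarith : 0 ≤ sInf (T ∩ Ici x) - sSup (T ∩ Iic x))
    rw [smul_eq_mul, smul_eq_mul, ← ENNReal.ofReal_mul p1, ← ENNReal.ofReal_mul p2,
      ← ENNReal.ofReal_add (mul_nonneg p1 (hf0 _)) (mul_nonneg p2 (hf0 _)),
      hlin _ _ h1 h2 h3 h4 h5]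

lemma sk_kel_null {T : Set ℝ} (hT : IsClosed T) {x : ℝ} (hx : x ∈ sk_A T) :
    kellererDilation T x Tᶜ = 0 := by
  have hm : MeasurableSet Tᶜ := hT.measurableSet.compl
  by_cases hxT : x ∈ T
  · rw [kellererDilation, if_pos hxT, Measure.dirac_apply' _ hm]; simp [hxT]
  · obtain ⟨h1, h2, h3, h4, h5⟩ := sk_gap hT hx hxT
    rw [kellererDilation, if_neg hxT, Measure.add_apply, Measure.smul_apply, Measure.smul_apply,
      Measure.dirac_apply' _ hm, Measure.dirac_apply' _ hm]
    simp [h1, h2]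

lemma sk_kel {T : Set ℝ} (hT : IsClosed T) {η : Measure ℝ} [IsProbabilityMeasure η]
    (hi : Integrable (fun x : ℝ => x) η) (hη : ∀ᵐ x ∂η, x ∈ sk_A T) (hne : T.Nonempty) :
    IsProbabilityMeasure (η.bind (kellererDilation T)) ∧
    Integrable (fun x : ℝ => x) (η.bind (kellererDilation T)) ∧
    (∀ᵐ x ∂(η.bind (kellererDilation T)), x ∈ T) ∧
    (∀ t ∈ T, sk_P (η.bind (kellererDilation T)) t = sk_P η t) ∧
    ∫ x, x ∂(η.bind (kellererDilation T)) = ∫ x, x ∂η := by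
  set κ := η.bind (kellererDilation T) with hκ
  have hk := sk_kel_aemeas hT hη
  have hbind : ∀ f : ℝ → ℝ, Measurable f → (∀ y, 0 ≤ f y) →
      (∀ x l u, l ∈ T → u ∈ T → l < x → x < u → (∀ t ∈ T, t ≤ l ∨ u ≤ t) →
      (u - x) / (u - l) * f l + (x - l) / (u - l) * f u = f x) →
      ∫⁻ y, ENNReal.ofReal (f y) ∂κ = ∫⁻ y, ENNReal.ofReal (f y) ∂η := by
    intro f hf hf0 hlin
    rw [hκ, Measure.lintegral_bind hk hf.ennreal_ofReal.aemeasurable]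
    refine lintegral_congr_ae ?_
    filter_upwards [hη] with x hx
    exact sk_kel_lintegral hT hx hf hf0 (hlin x)
  have hprob : IsProbabilityMeasure κ := by
    refine ⟨?_⟩
    have := hbind (fun _ => 1) measurable_const (fun _ => zero_le_one) (by
      intro x l u _ _ h1 h2 _
      have : u - l ≠ 0 := by linarith
      field_simp; ring)
    simpa using this
  have hput : ∀ t ∈ T, ∫⁻ y, ENNReal.ofReal (max (t - y) 0) ∂κ =
      ∫⁻ y, ENNReal.ofReal (max (t - y) 0) ∂η := by
    intro t ht
    refine hbind _ (by fun_prop) (fun _ => le_max_right _ _) ?_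
    intro x l u _ _ h1 h2 h3
    have : u - l ≠ 0 := by linarith
    rcases h3 t ht with h | h
    · rw [max_eq_right (by linarith), max_eq_right (by linarith), max_eq_right (by linarith)]; ring
    · rw [max_eq_left (by linarith), max_eq_left (by linarith), max_eq_left (by linarith)]
      field_simp; ring
  have hcall : ∀ t ∈ T, ∫⁻ y, ENNReal.ofReal (max (y - t) 0) ∂κ =
      ∫⁻ y, ENNReal.ofReal (max (y - t) 0) ∂η := by
    intro t ht
    refine hbind _ (by fun_prop) (fun _ => le_max_right _ _) ?_
    intro x l u _ _ h1 h2 h3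
    have : u - l ≠ 0 := by linarith
    rcases h3 t ht with h | h
    · rw [max_eq_left (by linarith), max_eq_left (by linarith), max_eq_left (by linarith)]
      field_simp; ring
    · rw [max_eq_right (by linarith), max_eq_right (by linarith), max_eq_right (by linarith)]; ring
  obtain ⟨t0, ht0⟩ := hne
  have hfin : ∀ f : ℝ → ℝ, Measurable f → (∀ y, 0 ≤ f y) → Integrable f η →
      ∫⁻ y, ENNReal.ofReal (f y) ∂κ = ∫⁻ y, ENNReal.ofReal (f y) ∂η →
      Integrable f κ ∧ ∫ y, f y ∂κ = ∫ y, f y ∂η := by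
    intro f hf hf0 hfi he
    constructor
    · refine (lintegral_ofReal_ne_top_iff_integrable hf.aestronglyMeasurable
        (Eventually.of_forall hf0)).1 ?_
      rw [he]
      exact (lintegral_ofReal_ne_top_iff_integrable hf.aestronglyMeasurable
        (Eventually.of_forall hf0)).2 hfi
    · rw [integral_eq_lintegral_of_nonneg_ae (Eventually.of_forall hf0) hf.aestronglyMeasurable,
        integral_eq_lintegral_of_nonneg_ae (Eventually.of_forall hf0) hf.aestronglyMeasurable, he]
  have hp := fun t ht => hfin (fun y => max (t - y) 0) (by fun_prop) (fun _ => le_max_right _ _)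
    (sk_int_max hi t) (hput t ht)
  have hq := fun t ht => hfin (fun y => max (y - t) 0) (by fun_prop) (fun _ => le_max_right _ _)
    (sk_int_max' hi t) (hcall t ht)
  have hiκ : Integrable (fun x : ℝ => x) κ := by
    have := (((hq t0 ht0).1.sub (hp t0 ht0).1).add (integrable_const t0))
    refine this.congr (Eventually.of_forall fun x => ?_)
    simp only [Pi.add_apply, Pi.sub_apply]
    rcases le_total x t0 with h | h
    · rw [max_eq_right (by linarith), max_eq_left (by linarith)]; ring
    · rw [max_eq_left (by linarith), max_eq_right (by linarith)]; ring
  refine ⟨hprob, hiκ, ?_, fun t ht => (hp t ht).2, ?_⟩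
  · rw [ae_iff]
    change κ Tᶜ = 0
    rw [hκ, Measure.bind_apply hT.measurableSet.compl hk]
    rw [lintegral_congr_ae (g := fun _ => 0) (by
      filter_upwards [hη] with x hx
      exact sk_kel_null hT hx)]
    simp
  · have h1 := (hq t0 ht0).2
    have h2 := (hp t0 ht0).2
    rw [sk_call hi, sk_call hiκ] at h1
    simp only [probReal_univ] at h1
    change sk_P κ t0 = sk_P η t0 at h2
    linarith
end

section
open Set Filter Topology

lemma sk_lip_abs {f : ℝ → ℝ} (hf : LipschitzWith 1 f) (x y : ℝ) : |f x - f y| ≤ |x - y| := by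
  have := hf.dist_le_mul x y
  simpa [Real.dist_eq] using this

lemma sk_lip_int {f : ℝ → ℝ} (hf : LipschitzWith 1 f) {μ : Measure ℝ} [IsFiniteMeasure μ]
    (h : Integrable (fun x : ℝ => x) μ) : Integrable f μ := by
  refine Integrable.mono' ((integrable_const |f 0|).add h.abs) hf.continuous.aestronglyMeasurable
    (Eventually.of_forall fun x => ?_)
  have h1 := sk_lip_abs hf x 0
  have h2 := abs_sub_abs_le_abs_sub (f x) (f 0)
  simp only [Pi.add_apply, Real.norm_eq_abs, sub_zero] at *
  linarith

lemma sk_W1_le {f : ℝ → ℝ} (hf : LipschitzWith 1 f) {μ ν : Measure ℝ} [IsProbabilityMeasure μ]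
    [IsProbabilityMeasure ν] (hμ : Integrable (fun x : ℝ => x) μ)
    (hν : Integrable (fun x : ℝ => x) ν) :
    |∫ x, f x ∂μ - ∫ x, f x ∂ν| ≤ W1 μ ν := by
  have hb : BddAbove (range fun f : {f : ℝ → ℝ // LipschitzWith 1 f} =>
      |∫ x, (f : ℝ → ℝ) x ∂μ - ∫ x, (f : ℝ → ℝ) x ∂ν|) := by
    refine ⟨∫ x, |x| ∂μ + ∫ x, |x| ∂ν, ?_⟩
    rintro _ ⟨⟨g, hg⟩, rfl⟩
    have key : ∀ ρ : Measure ℝ, IsProbabilityMeasure ρ → Integrable (fun x : ℝ => x) ρ →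
        |∫ x, g x ∂ρ - g 0| ≤ ∫ x, |x| ∂ρ := by
      intro ρ hp hρ
      have h1 : ∫ x, g x ∂ρ - g 0 = ∫ x, (g x - g 0) ∂ρ := by
        rw [integral_sub (sk_lip_int hg hρ) (integrable_const _)]; simp
      rw [h1]
      refine abs_integral_le_integral_abs.trans ?_
      refine integral_mono ((sk_lip_int hg hρ).sub (integrable_const _)).abs hρ.abs fun x => ?_
      simpa using sk_lip_abs hg x 0
    have h1 := abs_le.1 (key μ inferInstance hμ)
    have h2 := abs_le.1 (key ν inferInstance hν)
    simp only
    rw [abs_le]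
    constructor <;> linarith [h1.1, h1.2, h2.1, h2.2]
  exact le_ciSup hb ⟨f, hf⟩

lemma sk_W1_nonneg (μ ν : Measure ℝ) : 0 ≤ W1 μ ν := Real.iSup_nonneg fun _ => abs_nonneg _

lemma sk_W1_tendsto {f : ℝ → ℝ} (hf : LipschitzWith 1 f) {μ : ℕ → Measure ℝ} {ν : Measure ℝ}
    [∀ n, IsProbabilityMeasure (μ n)]
    [IsProbabilityMeasure ν] (hμ : ∀ n, Integrable (fun x : ℝ => x) (μ n))
    (hν : Integrable (fun x : ℝ => x) ν) (h : Tendsto (fun n => W1 (μ n) ν) atTop (𝓝 0)) :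
    Tendsto (fun n => ∫ x, f x ∂(μ n)) atTop (𝓝 (∫ x, f x ∂ν)) := by
  rw [tendsto_iff_dist_tendsto_zero]
  refine squeeze_zero (fun _ => dist_nonneg) (fun n => ?_) h
  rw [Real.dist_eq]
  exact sk_W1_le hf (hμ n) hν

/-- ramp on the `i`-th cell -/
noncomputable def sk_r (a ε : ℝ) (i : ℕ) (x : ℝ) : ℝ :=
  ε - max (a + (i + 1) * ε - x) 0 + max (a + i * ε - x) 0

/-- piecewise linear interpolation -/
noncomputable def sk_I (f : ℝ → ℝ) (a ε : ℝ) (M : ℕ) (x : ℝ) : ℝ :=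
  f a + ∑ i ∈ Finset.range M, (f (a + (i + 1) * ε) - f (a + i * ε)) / ε * sk_r a ε i x

lemma sk_I_err {f : ℝ → ℝ} (hf : LipschitzWith 1 f) (a : ℝ) {ε : ℝ} (hε : 0 < ε) (M : ℕ) :
    (∀ x, a + M * ε ≤ x → sk_I f a ε M x = f (a + M * ε)) ∧
    ∀ x, |f (min x (a + M * ε)) - sk_I f a ε M x| ≤ 2 * ε + max (a - x) 0 := by
  induction M with
  | zero =>
    refine ⟨fun x hx => by simp [sk_I], fun x => ?_⟩
    simp only [sk_I, Finset.range_zero, Finset.sum_empty, Nat.cast_zero, zero_mul, add_zero]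
    refine (sk_lip_abs hf _ _).trans ?_
    rcases le_total x a with h | h
    · rw [min_eq_left h, max_eq_left (by linarith), abs_of_nonpos (by linarith)]; linarith
    · rw [min_eq_right h, max_eq_right (by linarith)]; simp; linarith
  | succ M ih =>
    obtain ⟨ih1, ih2⟩ := ih
    have hstep : ∀ x, sk_I f a ε (M + 1) x = sk_I f a ε M x +
        (f (a + (M + 1) * ε) - f (a + M * ε)) / ε * sk_r a ε M x := by
      intro x
      simp only [sk_I, Finset.sum_range_succ]; ring
    have hlt : a + M * ε ≤ a + (M + 1) * ε := by linarith
    have hd : |(f (a + (M + 1) * ε) - f (a + M * ε)) / ε| ≤ 1 := by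
      rw [abs_div, abs_of_pos hε, div_le_one hε]
      refine (sk_lip_abs hf _ _).trans ?_
      rw [abs_of_nonneg (by linarith)]; linarith
    push_cast
    have hend : ∀ x, a + (M + 1) * ε ≤ x → sk_I f a ε (M + 1) x = f (a + (M + 1) * ε) := by
      intro x hx
      rw [hstep, ih1 x (by linarith), sk_r, max_eq_right (by linarith), max_eq_right (by linarith)]
      field_simp; ring
    refine ⟨hend, fun x => ?_⟩
    have h0 := le_max_right (a - x) 0
    rcases le_total x (a + M * ε) with h | h
    · have := ih2 x
      rw [min_eq_left h] at this
      rw [min_eq_left (by linarith), hstep]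
      have hr : sk_r a ε M x = 0 := by
        rw [sk_r, max_eq_left (by linarith), max_eq_left (by linarith)]; ring
      rw [hr, mul_zero, add_zero]; exact this
    · rcases le_total x (a + (M + 1) * ε) with h' | h'
      · rw [min_eq_left h', hstep, ih1 x h]
        have hr : sk_r a ε M x = x - (a + M * ε) := by
          rw [sk_r, max_eq_left (by linarith), max_eq_right (by linarith)]; ring
        rw [hr]
        have h1 := sk_lip_abs hf x (a + M * ε)
        rw [abs_of_nonneg (a := x - (a + M * ε)) (by linarith)] at h1
        have h2 : |(f (a + (M + 1) * ε) - f (a + M * ε)) / ε * (x - (a + M * ε))| ≤ ε := by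
          rw [abs_mul, abs_of_nonneg (a := x - (a + M * ε)) (by linarith)]
          have := mul_le_mul_of_nonneg_right hd (by linarith : 0 ≤ x - (a + M * ε))
          linarith
        have h3 := abs_sub (f x - f (a + M * ε))
          ((f (a + (M + 1) * ε) - f (a + M * ε)) / ε * (x - (a + M * ε)))
        rw [← sub_sub]
        linarith
      · rw [min_eq_right h', hend x h']; simp; linarith

lemma sk_I_err' {f : ℝ → ℝ} (hf : LipschitzWith 1 f) (a : ℝ) {ε : ℝ} (hε : 0 < ε) (M : ℕ) (x : ℝ) :
    |f x - sk_I f a ε M x| ≤ 2 * ε + max (a - x) 0 + max (x - (a + M * ε)) 0 := by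
  have h1 := (sk_I_err hf a hε M).2 x
  have h2 := sk_lip_abs hf x (min x (a + M * ε))
  have h3 := abs_sub_le (f x) (f (min x (a + M * ε))) (sk_I f a ε M x)
  have h4 : |x - min x (a + M * ε)| = max (x - (a + M * ε)) 0 := by
    rcases le_total x (a + M * ε) with h | h
    · rw [min_eq_left h, max_eq_right (by linarith)]; simp
    · rw [min_eq_right h, max_eq_left (by linarith), abs_of_nonneg (by linarith)]
  linarith

lemma sk_r_int {μ : Measure ℝ} [IsProbabilityMeasure μ] (hμ : Integrable (fun x : ℝ => x) μ)
    (a ε : ℝ) (i : ℕ) : Integrable (sk_r a ε i) μ ∧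
    ∫ x, sk_r a ε i x ∂μ = ε - sk_P μ (a + (i + 1) * ε) + sk_P μ (a + i * ε) := by
  have h1 := (integrable_const (μ := μ) ε).sub (sk_int_max hμ (a + (i + 1) * ε))
  refine ⟨h1.add (sk_int_max hμ (a + i * ε)), ?_⟩
  simp only [sk_r]
  rw [integral_add (by exact h1) (sk_int_max hμ _), integral_sub (integrable_const _) (sk_int_max hμ _)]
  simp [sk_P]

lemma sk_I_int {μ : Measure ℝ} [IsProbabilityMeasure μ] (hμ : Integrable (fun x : ℝ => x) μ)
    (f : ℝ → ℝ) (a ε : ℝ) (M : ℕ) : Integrable (sk_I f a ε M) μ ∧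
    ∫ x, sk_I f a ε M x ∂μ = f a + ∑ i ∈ Finset.range M,
      (f (a + (i + 1) * ε) - f (a + i * ε)) / ε *
        (ε - sk_P μ (a + (i + 1) * ε) + sk_P μ (a + i * ε)) := by
  have h1 : ∀ i ∈ Finset.range M, Integrable (fun x =>
      (f (a + (i + 1) * ε) - f (a + i * ε)) / ε * sk_r a ε i x) μ :=
    fun i _ => (sk_r_int hμ a ε i).1.const_mul _
  have h2 := integrable_finsetSum _ h1
  refine ⟨(integrable_const _).add h2, ?_⟩
  simp only [sk_I]
  rw [integral_add (integrable_const _) h2, integral_finsetSum _ h1]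
  simp only [integral_const_mul, (sk_r_int hμ a ε _).2]
  simp

lemma sk_W1_bound {μ ν : Measure ℝ} [IsProbabilityMeasure μ] [IsProbabilityMeasure ν]
    (hμ : Integrable (fun x : ℝ => x) μ) (hν : Integrable (fun x : ℝ => x) ν)
    (a : ℝ) {ε : ℝ} (hε : 0 < ε) (M : ℕ) :
    W1 μ ν ≤ ∑ i ∈ Finset.range M, (|sk_P μ (a + (i + 1) * ε) - sk_P ν (a + (i + 1) * ε)| +
        |sk_P μ (a + i * ε) - sk_P ν (a + i * ε)|) +
      (2 * ε + sk_P μ a + (sk_P μ (a + M * ε) + ∫ x, x ∂μ - (a + M * ε))) +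
      (2 * ε + sk_P ν a + (sk_P ν (a + M * ε) + ∫ x, x ∂ν - (a + M * ε))) := by
  have : Nonempty {f : ℝ → ℝ // LipschitzWith 1 f} := ⟨⟨id, LipschitzWith.id⟩⟩
  refine ciSup_le ?_
  rintro ⟨f, hf⟩
  simp only
  have err : ∀ ρ : Measure ℝ, IsProbabilityMeasure ρ → Integrable (fun x : ℝ => x) ρ →
      |∫ x, f x ∂ρ - ∫ x, sk_I f a ε M x ∂ρ| ≤
      2 * ε + sk_P ρ a + (sk_P ρ (a + M * ε) + ∫ x, x ∂ρ - (a + M * ε)) := by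
    intro ρ hp hρ
    rw [← integral_sub (sk_lip_int hf hρ) (sk_I_int hρ f a ε M).1]
    have hb := ((integrable_const (μ := ρ) (2 * ε)).add (sk_int_max hρ a)).add
      (sk_int_max' hρ (a + M * ε))
    have hv : ∫ x, (2 * ε + max (a - x) 0 + max (x - (a + M * ε)) 0) ∂ρ =
        2 * ε + sk_P ρ a + (sk_P ρ (a + M * ε) + ∫ x, x ∂ρ - (a + M * ε)) := by
      rw [integral_add (by exact ((integrable_const (μ := ρ) (2 * ε)).add (sk_int_max hρ a)))
        (sk_int_max' hρ _), integral_add (integrable_const _) (sk_int_max hρ a), sk_call hρ]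
      simp [sk_P]
    rw [← hv]
    refine abs_integral_le_integral_abs.trans ?_
    exact integral_mono ((sk_lip_int hf hρ).sub (sk_I_int hρ f a ε M).1).abs hb
      fun x => sk_I_err' hf a hε M x
  have e1 := err μ inferInstance hμ
  have e2 := err ν inferInstance hν
  have e3 : |∫ x, sk_I f a ε M x ∂μ - ∫ x, sk_I f a ε M x ∂ν| ≤
      ∑ i ∈ Finset.range M, (|sk_P μ (a + (i + 1) * ε) - sk_P ν (a + (i + 1) * ε)| +
        |sk_P μ (a + i * ε) - sk_P ν (a + i * ε)|) := by
    rw [(sk_I_int hμ f a ε M).2, (sk_I_int hν f a ε M).2, add_sub_add_left_eq_sub,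
      ← Finset.sum_sub_distrib]
    refine (Finset.abs_sum_le_sum_abs _ _).trans (Finset.sum_le_sum fun i _ => ?_)
    rw [← mul_sub, abs_mul]
    have hd : |(f (a + (i + 1) * ε) - f (a + i * ε)) / ε| ≤ 1 := by
      rw [abs_div, abs_of_pos hε, div_le_one hε]
      refine (sk_lip_abs hf _ _).trans ?_
      rw [abs_of_nonneg (by linarith)]; linarith
    refine (mul_le_of_le_one_left (abs_nonneg _) hd).trans ?_
    have := abs_sub (sk_P μ (a + i * ε) - sk_P ν (a + i * ε))
      (sk_P μ (a + (i + 1) * ε) - sk_P ν (a + (i + 1) * ε))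
    rw [show ε - sk_P μ (a + (i + 1) * ε) + sk_P μ (a + i * ε) -
      (ε - sk_P ν (a + (i + 1) * ε) + sk_P ν (a + i * ε)) =
      (sk_P μ (a + i * ε) - sk_P ν (a + i * ε)) -
      (sk_P μ (a + (i + 1) * ε) - sk_P ν (a + (i + 1) * ε)) by ring]
    linarith
  rw [abs_le] at *
  constructor <;> linarith [e1.1, e1.2, e2.1, e2.2, e3.1, e3.2]

lemma sk_W1_of_P {μ : ℕ → Measure ℝ} {ν : Measure ℝ} [∀ n, IsProbabilityMeasure (μ n)]
    [IsProbabilityMeasure ν] (hμ : ∀ n, Integrable (fun x : ℝ => x) (μ n))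
    (hν : Integrable (fun x : ℝ => x) ν)
    (hP : ∀ t, Tendsto (fun n => sk_P (μ n) t) atTop (𝓝 (sk_P ν t)))
    (hm : Tendsto (fun n => ∫ x, x ∂(μ n)) atTop (𝓝 (∫ x, x ∂ν))) :
    Tendsto (fun n => W1 (μ n) ν) atTop (𝓝 0) := by
  refine tendsto_order.2 ⟨fun c hc => Eventually.of_forall fun n =>
    hc.trans_le (sk_W1_nonneg _ _), fun c hc => ?_⟩
  set ε := c / 9 with hε
  have hε0 : 0 < ε := by positivity
  obtain ⟨a, ha⟩ := ((sk_P_atBot hν).eventually (gt_mem_nhds hε0)).exists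
  have ht : Tendsto (fun M : ℕ => a + M * ε) atTop atTop :=
    tendsto_atTop_add_const_left _ _ (tendsto_natCast_atTop_atTop.atTop_mul_const hε0)
  obtain ⟨M, hM⟩ := (((sk_P_atTop hν).comp ht).eventually (gt_mem_nhds hε0)).exists
  simp only [Function.comp, probReal_univ, one_mul] at hM
  have habs : ∀ t, Tendsto (fun n => |sk_P (μ n) t - sk_P ν t|) atTop (𝓝 0) := by
    intro t
    have := ((hP t).sub_const (sk_P ν t)).abs
    simpa using this
  have hs : Tendsto (fun n => ∑ i ∈ Finset.range M,
      (|sk_P (μ n) (a + (i + 1) * ε) - sk_P ν (a + (i + 1) * ε)| +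
        |sk_P (μ n) (a + i * ε) - sk_P ν (a + i * ε)|)) atTop (𝓝 0) := by
    have := tendsto_finsetSum (Finset.range M) fun i _ =>
      (habs (a + (i + 1) * ε)).add (habs (a + i * ε))
    simpa using this
  have h2 := (((hP a).const_add (2 * ε)).add
    (((hP (a + M * ε)).add hm).sub_const (a + M * ε)))
  have h3 := (hs.add h2).add_const
    (2 * ε + sk_P ν a + (sk_P ν (a + M * ε) + ∫ x, x ∂ν - (a + M * ε)))
  have := h3.eventually_lt_const (u := c) (by linarith)
  filter_upwards [this] with n hn
  exact (sk_W1_bound (hμ n) hν a hε0 M).trans_lt hn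
end

section
open Set Filter Topology

lemma sk_onT_gap {T : Set ℝ} {μ : Measure ℝ} [IsProbabilityMeasure μ]
    (hμ : Integrable (fun x : ℝ => x) μ) (hT : ∀ᵐ x ∂μ, x ∈ T) {t l u : ℝ} (hl : l < t)
    (hu : t < u) (hg : ∀ x ∈ T, x ≤ l ∨ u ≤ x) :
    sk_P μ t = (u - t) / (u - l) * sk_P μ l + (t - l) / (u - l) * sk_P μ u := by
  simp only [sk_P]
  rw [← integral_const_mul, ← integral_const_mul,
    ← integral_add ((sk_int_max hμ l).const_mul _) ((sk_int_max hμ u).const_mul _)]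
  refine integral_congr_ae ?_
  filter_upwards [hT] with x hx
  have : u - l ≠ 0 := by linarith
  rcases hg x hx with h | h
  · rw [max_eq_left (by linarith), max_eq_left (by linarith), max_eq_left (by linarith)]
    field_simp; ring
  · rw [max_eq_right (by linarith), max_eq_right (by linarith), max_eq_right (by linarith)]; ring

lemma sk_onT_below {T : Set ℝ} {μ : Measure ℝ} (hT : ∀ᵐ x ∂μ, x ∈ T) {t : ℝ}
    (h : ∀ x ∈ T, t ≤ x) : sk_P μ t = 0 := by
  simp only [sk_P]
  rw [integral_congr_ae (g := fun _ => 0)]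
  · simp
  filter_upwards [hT] with x hx
  exact max_eq_right (by linarith [h x hx])

lemma sk_onT_above {T : Set ℝ} {μ : Measure ℝ} [IsProbabilityMeasure μ]
    (hμ : Integrable (fun x : ℝ => x) μ) (hT : ∀ᵐ x ∂μ, x ∈ T) {t : ℝ}
    (h : ∀ x ∈ T, x ≤ t) : sk_P μ t = t - ∫ x, x ∂μ := by
  have h1 := sk_call hμ t
  have h2 : ∫ x, max (x - t) 0 ∂μ = 0 := by
    rw [integral_congr_ae (g := fun _ => 0)]
    · simp
    filter_upwards [hT] with x hx
    exact max_eq_right (by linarith [h x hx])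
  simp only [probReal_univ] at h1
  linarith

lemma sk_null_left {μ : Measure ℝ} [IsProbabilityMeasure μ]
    (hμ : Integrable (fun x : ℝ => x) μ) {b : ℝ} (h : sk_P μ b ≤ 0) : μ (Iio b) = 0 := by
  have h0 : sk_P μ b = 0 := le_antisymm h (sk_P_nonneg _ _)
  have := (integral_eq_zero_iff_of_nonneg (fun _ => le_max_right _ _) (sk_int_max hμ b)).1 h0
  rw [Filter.EventuallyEq, ae_iff] at this
  refine measure_mono_null ?_ this
  intro x hx hx'
  have h1 := le_max_left (b - x) 0
  simp only [Pi.zero_apply] at hx'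
  have := mem_Iio.1 hx
  linarith

lemma sk_null_right {μ : Measure ℝ} [IsProbabilityMeasure μ]
    (hμ : Integrable (fun x : ℝ => x) μ) {b : ℝ} (h : ∫ x, max (x - b) 0 ∂μ ≤ 0) :
    μ (Ioi b) = 0 := by
  have h0 : ∫ x, max (x - b) 0 ∂μ = 0 :=
    le_antisymm h (integral_nonneg fun _ => le_max_right _ _)
  have := (integral_eq_zero_iff_of_nonneg (fun _ => le_max_right _ _) (sk_int_max' hμ b)).1 h0
  rw [Filter.EventuallyEq, ae_iff] at this
  refine measure_mono_null ?_ this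
  intro x hx hx'
  have h1 := le_max_left (x - b) 0
  simp only [Pi.zero_apply] at hx'
  have := mem_Ioi.1 hx
  linarith

lemma sk_main (η : ℕ → Measure ℝ) (ηlim : Measure ℝ)
    [∀ n, IsProbabilityMeasure (η n)] [IsProbabilityMeasure ηlim]
    (hint : ∀ n, Integrable (fun x : ℝ => x) (η n))
    (hintlim : Integrable (fun x : ℝ => x) ηlim)
    (hconv : Tendsto (fun n => W1 (η n) ηlim) atTop (𝓝 0))
    (H : ℕ → NNReal) (hH : Tendsto H atTop atTop)
    (υ : Measure ℝ) [IsFiniteMeasure υ] (hυ : Integrable (fun x : ℝ => x) υ)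
    (S : ℕ → Measure ℝ) (hS : ∀ n, IsShadow (η n) ((H n : ENNReal) • υ) (S n)) :
    Tendsto (fun n => W1 (S n) (ηlim.bind (kellererDilation (msupport υ)))) atTop (𝓝 0) ∧
      ∀ x ∈ msupport ηlim, x ∈ sk_A (msupport υ) := by
  set T := msupport υ with hTdef
  have hT : IsClosed T := sk_msupport_closed υ
  have hνf : ∀ n, IsFiniteMeasure ((H n : ENNReal) • υ) := fun n => by
    refine ⟨?_⟩
    rw [Measure.smul_apply, smul_eq_mul]
    exact ENNReal.mul_lt_top ENNReal.coe_lt_top (measure_lt_top _ _)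
  have hν : ∀ n, Integrable (fun x : ℝ => x) ((H n : ENNReal) • υ) :=
    fun n => hυ.smul_measure ENNReal.coe_ne_top
  have hSi : ∀ n, Integrable (fun x : ℝ => x) (S n) := fun n => sk_int_le (hS n).2.1 (hν n)
  have hSf : ∀ n, IsFiniteMeasure (S n) := fun n => isFiniteMeasure_of_le _ (hS n).2.1
  have hcons := fun n => sk_order_consequences (hint n) (hSi n) (hS n).1
  have hSp : ∀ n, IsProbabilityMeasure (S n) := fun n => by
    have h1 := (hcons n).1
    rw [probReal_univ] at h1
    refine ⟨?_⟩
    rw [← ENNReal.toReal_eq_one_iff]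
    exact h1.symm
  have hST : ∀ n, ∀ᵐ x ∂(S n), x ∈ T := fun n => by
    rw [ae_iff]
    change S n Tᶜ = 0
    refine le_antisymm (((hS n).2.1 _).trans ?_) zero_le
    rw [Measure.smul_apply, sk_msupport_null]; simp
  have hne : T.Nonempty := by
    obtain ⟨x, hx⟩ := (hST 0).exists
    exact ⟨x, hx⟩
  have hlipP : ∀ t : ℝ, LipschitzWith 1 (fun x : ℝ => max (t - x) 0) := fun t => by
    refine LipschitzWith.of_dist_le_mul fun x y => ?_
    rw [Real.dist_eq, Real.dist_eq, NNReal.coe_one, one_mul]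
    refine (abs_max_sub_max_le_abs _ _ _).trans ?_
    rw [show t - x - (t - y) = -(x - y) by ring, abs_neg]
  have hPη : ∀ t, Tendsto (fun n => sk_P (η n) t) atTop (𝓝 (sk_P ηlim t)) :=
    fun t => sk_W1_tendsto (hlipP t) hint hintlim hconv
  have hmη : Tendsto (fun n => ∫ x, x ∂(η n)) atTop (𝓝 (∫ x, x ∂ηlim)) :=
    sk_W1_tendsto LipschitzWith.id hint hintlim hconv
  have hmS : Tendsto (fun n => ∫ x, x ∂(S n)) atTop (𝓝 (∫ x, x ∂ηlim)) :=
    hmη.congr fun n => (hcons n).2.1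
  -- null sets of the limit
  have hnl : ∀ b, (∀ x ∈ T, b ≤ x) → ηlim (Iio b) = 0 := by
    intro b hb
    refine sk_null_left hintlim (le_of_tendsto (hPη b) (Eventually.of_forall fun n => ?_))
    exact ((hcons n).2.2 b).trans (sk_onT_below (hST n) hb).le
  have hnr : ∀ b, (∀ x ∈ T, x ≤ b) → ηlim (Ioi b) = 0 := by
    intro b hb
    refine sk_null_right hintlim ?_
    rw [sk_call hintlim b]
    refine le_of_tendsto (((hPη b).add hmη).sub_const _) (Eventually.of_forall fun n => ?_)
    have h1 := (hcons n).2.2 b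
    rw [sk_onT_above (hSi n) (hST n) hb] at h1
    have h2 := (hcons n).2.1
    simp only [probReal_univ]
    linarith
  -- if `x` lies outside then an open half line around it is null
  have hout : ∀ x, x ∉ sk_A T → ∃ U, IsOpen U ∧ x ∈ U ∧ ηlim U = 0 := by
    intro x hx
    rw [sk_A, mem_ofPred_eq, not_and_or] at hx
    push Not at hx
    rcases hx with hx | hx
    · have hbd : BddBelow T := ⟨x, fun y hy => (hx y hy).le⟩
      have := hT.csInf_mem hne hbd
      exact ⟨Iio (sInf T), isOpen_Iio, hx _ this, hnl _ fun y hy => csInf_le hbd hy⟩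
    · have hbd : BddAbove T := ⟨x, fun y hy => (hx y hy).le⟩
      have := hT.csSup_mem hne hbd
      exact ⟨Ioi (sSup T), isOpen_Ioi, hx _ this, hnr _ fun y hy => le_csSup hbd hy⟩
  have hsupp : ∀ x ∈ msupport ηlim, x ∈ sk_A T := by
    intro x hx
    by_contra h
    obtain ⟨U, hU, hxU, h0⟩ := hout x h
    exact (hx U hU hxU).ne' h0
  have hae : ∀ᵐ x ∂ηlim, x ∈ sk_A T := by
    rw [ae_iff]
    exact measure_mono_null (fun x hx hx' => hx (hsupp x hx')) (sk_msupport_null ηlim)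
  obtain ⟨hκp, hκi, hκT, hκP, hκm⟩ := sk_kel hT hintlim hae hne
  refine ⟨?_, hsupp⟩
  set κ := ηlim.bind (kellererDilation T) with hκ
  have hPT : ∀ t ∈ T, Tendsto (fun n => sk_P (S n) t) atTop (𝓝 (sk_P κ t)) := by
    intro t ht
    rw [hκP t ht]
    refine tendsto_order.2 ⟨fun c hc => ?_, fun c hc => ?_⟩
    · filter_upwards [(hPη t).eventually_const_lt hc] with n hn
      exact hn.trans_le ((hcons n).2.2 t)
    · set δ := (c - sk_P ηlim t) / 4 with hδ
      have hδ0 : 0 < δ := by rw [hδ]; linarith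
      have hpos : 0 < υ.real (Ioo (t - δ) (t + δ)) := by
        rw [measureReal_def]
        exact ENNReal.toReal_pos (ht _ isOpen_Ioo ⟨by linarith, by linarith⟩).ne' (measure_ne_top _ _)
      have hHr : Tendsto (fun n => (H n : ℝ) * υ.real (Ioo (t - δ) (t + δ))) atTop atTop :=
        (NNReal.tendsto_coe_atTop.2 hH).atTop_mul_const hpos
      filter_upwards [hHr.eventually_ge_atTop 2,
        (hPη t).eventually_lt_const (u := sk_P ηlim t + δ) (by linarith)] with n h1 h2
      have := sk_key hυ (hint n) (hS n) h1
      linarith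
  refine sk_W1_of_P hSi hκi (fun t => ?_) (by rw [hκm]; exact hmS)
  by_cases htT : t ∈ T
  · exact hPT t htT
  by_cases htA : t ∈ sk_A T
  · obtain ⟨h1, h2, h3, h4, h5⟩ := sk_gap hT htA htT
    rw [sk_onT_gap hκi hκT h3 h4 h5]
    refine Tendsto.congr (fun n => (sk_onT_gap (hSi n) (hST n) h3 h4 h5).symm) ?_
    exact ((hPT _ h1).const_mul _).add ((hPT _ h2).const_mul _)
  · rw [sk_A, mem_ofPred_eq, not_and_or] at htA
    push Not at htA
    rcases htA with h | h
    · rw [sk_onT_below hκT fun x hx => (h x hx).le]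
      refine tendsto_const_nhds.congr fun n => ?_
      rw [sk_onT_below (hST n) fun x hx => (h x hx).le]
    · rw [sk_onT_above hκi hκT fun x hx => (h x hx).le, hκm]
      refine (hmS.const_sub t).congr fun n => ?_
      rw [sk_onT_above (hSi n) (hST n) fun x hx => (h x hx).le]
end

/-- If `η_n → η` in Wasserstein-1 distance, `H_n → ∞` and `η_n ≤_{c,+} H_n·υ`, then the
shadows `S^{H_n υ}(η_n)` converge in Wasserstein-1 distance to `η P_T` where `T = supp υ`,
and `supp η ⊆ [inf T, sup T]`. -/
theorem shadow_tendsto_kellerer (η : ℕ → Measure ℝ) (ηlim : Measure ℝ)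
    [∀ n, IsProbabilityMeasure (η n)] [IsProbabilityMeasure ηlim]
    (hint : ∀ n, Integrable (fun x : ℝ => x) (η n))
    (hintlim : Integrable (fun x : ℝ => x) ηlim)
    (hconv : Filter.Tendsto (fun n => W1 (η n) ηlim) Filter.atTop (nhds 0))
    (H : ℕ → NNReal) (hH : Filter.Tendsto H Filter.atTop Filter.atTop)
    (υ : Measure ℝ) [IsFiniteMeasure υ] (hυ : Integrable (fun x : ℝ => x) υ)
    (hdom : ∀ n, ConvexPlusOrder (η n) ((H n : ENNReal) • υ))
    (S : ℕ → Measure ℝ) (hS : ∀ n, IsShadow (η n) ((H n : ENNReal) • υ) (S n)) :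
    Filter.Tendsto (fun n => W1 (S n) (ηlim.bind (kellererDilation (msupport υ))))
        Filter.atTop (nhds 0) ∧
      ∀ x ∈ msupport ηlim,
        (∃ a ∈ msupport υ, a ≤ x) ∧ ∃ b ∈ msupport υ, x ≤ b := by
  exact sk_main η ηlim hint hintlim hconv H hH υ hυ S hS
end

section
/- Let μ ≤_c ν be probability measures on ℝ with finite first moments and let (μ_{[0,u]})_{u∈[0,1]} be an increasing (for setwise order) curve with μ_{[0,u]}(ℝ) = u and μ_{[0,1]} = μ. Define ν_{[0,u]} = S^ν(μ_{[0,u]}). Then for u ≤ v one has ν_{[0,u]} ≤ ν_{[0,v]} setwise and ν_{[0,u]}(ℝ) = u; i.e. the shadow curve is again a primitive curve. -/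
open MeasureTheory

namespace ShadowAux

open Set Filter Topology

lemma cont_of_convex {f : ℝ → ℝ} (hf : ConvexOn ℝ univ f) : Continuous f := by
  have := hf.continuousOn isOpen_univ
  exact continuousOn_univ.1 this

/-- right derivative -/
noncomputable def rd (f : ℝ → ℝ) (x : ℝ) : ℝ := derivWithin f (Ioi x) x

lemma hasRd {f : ℝ → ℝ} (hf : ConvexOn ℝ univ f) (x : ℝ) :
    HasDerivWithinAt f (rd f x) (Ioi x) x :=
  hf.hasDerivWithinAt_rightDeriv_of_mem_interior (by simp)

lemma rd_eq {f : ℝ → ℝ} {c x : ℝ} (h : HasDerivWithinAt f c (Ioi x) x) : rd f x = c :=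
  h.derivWithin (uniqueDiffWithinAt_Ioi x)

lemma rd_mono {f : ℝ → ℝ} (hf : ConvexOn ℝ univ f) : Monotone (rd f) := by
  have := hf.monotoneOn_rightDeriv
  rw [interior_univ] at this
  exact monotoneOn_univ.1 this

lemma rd_le {f : ℝ → ℝ} (hf : ConvexOn ℝ univ f) (x y : ℝ) :
    f x + rd f x * (y - x) ≤ f y := by
  rcases lt_trichotomy x y with h | h | h
  · have := hf.le_slope_of_hasDerivWithinAt_Ioi (mem_univ x) (mem_univ y) h (hasRd hf x)
    rw [slope_def_field, le_div_iff₀ (by linarith)] at this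
    linarith
  · subst h; simp
  · have h1 : slope f y x ≤ rd f x := by
      have hl := hf.leftDeriv_le_rightDeriv_of_mem_interior (x := x) (by simp)
      have hs := hf.slope_le_leftDeriv_of_mem_interior (mem_univ y) (y := x) (by simp) h
      exact hs.trans hl
    rw [slope_def_field, div_le_iff₀ (by linarith)] at h1
    linarith

lemma rd_rightCont {f : ℝ → ℝ} (hf : ConvexOn ℝ univ f) (x : ℝ) :
    ContinuousWithinAt (rd f) (Ici x) x := by
  have hc := cont_of_convex hf
  rw [← continuousWithinAt_Ioi_iff_Ici]
  have hs : Tendsto (slope f x) (𝓝[>] x) (𝓝 (rd f x)) :=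
    (hasDerivWithinAt_iff_tendsto_slope' (by simp)).1 (hasRd hf x)
  refine tendsto_order.2 ⟨fun a ha => ?_, fun b hb => ?_⟩
  · filter_upwards [self_mem_nhdsWithin] with y hy
    exact ha.trans_le (rd_mono hf (le_of_lt hy))
  · obtain ⟨z, hz1, hz2⟩ := ((hs.eventually_lt_const hb).and self_mem_nhdsWithin).exists
    have hz2 : x < z := hz2
    have hct : ContinuousAt (fun y => (f z - f y) / (z - y)) x := by
      apply ContinuousAt.div
      · fun_prop
      · fun_prop
      · linarith
    have h1 : (f z - f x) / (z - x) < b := by rwa [slope_def_field] at hz1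
    have h2 : ∀ᶠ y in 𝓝 x, (f z - f y) / (z - y) < b := hct.eventually_lt_const h1
    filter_upwards [nhdsWithin_le_nhds h2, nhdsWithin_le_nhds (eventually_lt_nhds hz2)] with y hy hyz
    refine lt_of_le_of_lt ?_ hy
    rw [le_div_iff₀ (by linarith)]
    linarith [rd_le hf y z]

noncomputable def stj (f : ℝ → ℝ) (hf : ConvexOn ℝ univ f) : StieltjesFunction ℝ where
  toFun := rd f
  mono' := rd_mono hf
  right_continuous' := rd_rightCont hf

lemma stj_apply (f : ℝ → ℝ) (hf : ConvexOn ℝ univ f) (x : ℝ) : stj f hf x = rd f x := rfl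

noncomputable def cm (f : ℝ → ℝ) (hf : ConvexOn ℝ univ f) : Measure ℝ := (stj f hf).measure

lemma cm_Ioc (f : ℝ → ℝ) (hf : ConvexOn ℝ univ f) (a b : ℝ) :
    cm f hf (Ioc a b) = ENNReal.ofReal (rd f b - rd f a) :=
  StieltjesFunction.measure_Ioc _ _ _

lemma cm_add {f g h : ℝ → ℝ} (hf : ConvexOn ℝ univ f) (hg : ConvexOn ℝ univ g)
    (hh : ConvexOn ℝ univ h) (e : ∀ x, h x = f x + g x) : cm h hh = cm f hf + cm g hg := by
  unfold cm
  rw [← StieltjesFunction.measure_add]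
  congr 1
  ext x
  rw [StieltjesFunction.add_apply, stj_apply, stj_apply, stj_apply]
  apply rd_eq
  have : h = fun x => f x + g x := funext e
  rw [this]
  exact (hasRd hf x).add (hasRd hg x)

/-- A continuous function with constant right derivative is affine. -/
lemma affine_of_rd {D : ℝ → ℝ} (hD : Continuous D) {c a b : ℝ}
    (h : ∀ x ∈ Ico a b, HasDerivWithinAt D c (Ioi x) x) :
    ∀ x ∈ Icc a b, D x = D a + c * (x - a) := by
  intro x hx
  have := eq_of_has_deriv_right_eq (f := D) (g := fun x => D a + c * (x - a)) (f' := fun _ => c)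
    (a := a) (b := b) (fun y hy => (hasDerivWithinAt_Ioi_iff_Ici).1 (h y hy))
    (fun y _ => by
      have : HasDerivAt (fun x => D a + c * (x - a)) c y := by
        simpa using (((hasDerivAt_id y).sub_const a).const_mul c).const_add (D a)
      exact this.hasDerivWithinAt) hD.continuousOn (by fun_prop) (by simp)
  exact this x hx

lemma affine_of_rd_univ {D : ℝ → ℝ} (hD : Continuous D) {c : ℝ}
    (h : ∀ x, HasDerivWithinAt D c (Ioi x) x) : ∀ x, D x = D 0 + c * x := by
  intro x
  rcases le_total 0 x with hx | hx
  · have := affine_of_rd (a := 0) (b := x) hD (fun y _ => h y) x ⟨hx, le_rfl⟩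
    simpa using this
  · have := affine_of_rd (a := x) (b := 0) hD (fun y _ => h y) 0 ⟨hx, le_rfl⟩
    linarith

/-! potentials -/

noncomputable def pot (m : Measure ℝ) (x : ℝ) : ℝ := ∫ k, max (k - x) 0 ∂m

lemma int_pot {m : Measure ℝ} [IsFiniteMeasure m] (hm : Integrable (fun x : ℝ => x) m) (x : ℝ) :
    Integrable (fun k => max (k - x) 0) m :=
  (hm.sub (integrable_const x)).sup (integrable_const 0)

lemma pot_nonneg (m : Measure ℝ) (x : ℝ) : 0 ≤ pot m x :=
  integral_nonneg fun _ => le_max_right _ _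

lemma convex_max_left (k : ℝ) : ConvexOn ℝ univ (fun x : ℝ => max (k - x) 0) := by
  refine ConvexOn.sup ?_ (convexOn_const 0 convex_univ)
  refine ⟨convex_univ, fun x _ y _ a b _ _ hab => le_of_eq ?_⟩
  have hb : b = 1 - a := by linarith
  subst hb
  simp only [smul_eq_mul]; ring

lemma convex_max_right (k : ℝ) : ConvexOn ℝ univ (fun x : ℝ => max (x - k) 0) := by
  refine ConvexOn.sup ?_ (convexOn_const 0 convex_univ)
  refine ⟨convex_univ, fun x _ y _ a b _ _ hab => le_of_eq ?_⟩
  have hb : b = 1 - a := by linarith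
  subst hb
  simp only [smul_eq_mul]; ring

lemma pot_convex {m : Measure ℝ} [IsFiniteMeasure m] (hm : Integrable (fun x : ℝ => x) m) :
    ConvexOn ℝ univ (pot m) := by
  refine ⟨convex_univ, fun x _ y _ a b ha hb hab => ?_⟩
  simp only [pot, smul_eq_mul]
  rw [← integral_const_mul, ← integral_const_mul, ← integral_add]
  · refine integral_mono (int_pot hm _) (((int_pot hm _).const_mul _).add
      ((int_pot hm _).const_mul _)) fun k => ?_
    exact (convex_max_left k).2 (mem_univ x) (mem_univ y) ha hb hab
  · exact (int_pot hm _).const_mul _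
  · exact (int_pot hm _).const_mul _

lemma pot_cont {m : Measure ℝ} [IsFiniteMeasure m] (hm : Integrable (fun x : ℝ => x) m) :
    Continuous (pot m) := cont_of_convex (pot_convex hm)

lemma pot_add {m n : Measure ℝ} [IsFiniteMeasure m] [IsFiniteMeasure n]
    (hm : Integrable (fun x : ℝ => x) m) (hn : Integrable (fun x : ℝ => x) n) (x : ℝ) :
    pot (m + n) x = pot m x + pot n x :=
  integral_add_measure (int_pot hm x) (int_pot hn x)

lemma pot_rd {m : Measure ℝ} [IsFiniteMeasure m] (hm : Integrable (fun x : ℝ => x) m) (x : ℝ) :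
    HasDerivWithinAt (pot m) (-(m.real (Ioi x))) (Ioi x) x := by
  rw [hasDerivWithinAt_iff_tendsto_slope' (by simp)]
  have e : -(m.real (Ioi x)) = ∫ k, -((Ioi x).indicator (fun _ => (1:ℝ)) k) ∂m := by
    rw [integral_neg, integral_indicator measurableSet_Ioi]; simp
  have e2 : ∀ y, slope (pot m) x y = ∫ k, (max (k - y) 0 - max (k - x) 0) / (y - x) ∂m := by
    intro y
    rw [slope_def_field, pot, pot, ← integral_sub (int_pot hm _) (int_pot hm _),
      integral_div]
  rw [e]
  refine Tendsto.congr (fun y => (e2 y).symm) ?_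
  refine tendsto_integral_filter_of_dominated_convergence (fun _ => 1) ?_ ?_
    (integrable_const 1) ?_
  · exact Eventually.of_forall fun y =>
      (((int_pot hm y).sub (int_pot hm x)).div_const _).aestronglyMeasurable
  · filter_upwards [self_mem_nhdsWithin] with y hy
    have hy : x < y := hy
    refine Eventually.of_forall fun k => ?_
    rw [Real.norm_eq_abs, abs_div, div_le_one (abs_pos.2 (by linarith))]
    have := abs_max_sub_max_le_abs (k - y) (k - x) 0
    refine this.trans (le_of_eq ?_)
    rw [abs_sub_comm]; congr 1; ring
  · refine Eventually.of_forall fun k => ?_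
    by_cases hk : x < k
    · refine tendsto_const_nhds.congr' ?_
      filter_upwards [self_mem_nhdsWithin, nhdsWithin_le_nhds (eventually_lt_nhds hk)] with y hy hyk
      have hy : x < y := hy
      rw [indicator_of_mem (by exact hk), max_eq_left (by linarith), max_eq_left (by linarith),
        eq_div_iff (by linarith)]
      ring
    · refine tendsto_const_nhds.congr' ?_
      filter_upwards [self_mem_nhdsWithin] with y hy
      have hy : x < y := hy
      rw [indicator_of_notMem (by exact hk), max_eq_right (by linarith), max_eq_right (by linarith)]
      simp

lemma real_Ioc {m : Measure ℝ} [IsFiniteMeasure m] {a b : ℝ} (hab : a ≤ b) :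
    m.real (Ioc a b) = m.real (Ioi a) - m.real (Ioi b) := by
  have : Ioc a b = Ioi a \ Ioi b := by ext; simp
  rw [this, measureReal_sdiff (Ioi_subset_Ioi hab) measurableSet_Ioi]

lemma cm_pot {m : Measure ℝ} [IsFiniteMeasure m] (hm : Integrable (fun x : ℝ => x) m)
    (h : ConvexOn ℝ univ (pot m)) : cm (pot m) h = m := by
  symm
  refine Measure.ext_of_Ioc _ _ fun a b hab => ?_
  rw [cm_Ioc, rd_eq (pot_rd hm a), rd_eq (pot_rd hm b)]
  rw [← ENNReal.ofReal_toReal (measure_ne_top m (Ioc a b))]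
  congr 1
  change m.real (Ioc a b) = _
  rw [real_Ioc hab.le]; ring

/-- B6 -/
lemma le_of_pot {η η₁ : Measure ℝ} [IsFiniteMeasure η] [IsFiniteMeasure η₁]
    (h : Integrable (fun x : ℝ => x) η) (h₁ : Integrable (fun x : ℝ => x) η₁)
    (hD : ConvexOn ℝ univ (fun x => pot η x - pot η₁ x)) : η₁ ≤ η := by
  have := cm_add (pot_convex h₁) hD (pot_convex h) (fun x => by ring)
  rw [cm_pot, cm_pot] at this
  · rw [this]; exact Measure.le_add_right le_rfl
  all_goals assumption

lemma pot_top {m : Measure ℝ} [IsFiniteMeasure m] (hm : Integrable (fun x : ℝ => x) m) :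
    Tendsto (pot m) atTop (𝓝 0) := by
  have : Tendsto (pot m) atTop (𝓝 (∫ _, (0:ℝ) ∂m)) := by
    refine tendsto_integral_filter_of_dominated_convergence (fun k => |k|) ?_ ?_ hm.abs ?_
    · exact Eventually.of_forall fun y => (int_pot hm y).aestronglyMeasurable
    · filter_upwards [eventually_ge_atTop 0] with y hy
      refine Eventually.of_forall fun k => ?_
      rw [Real.norm_eq_abs, abs_of_nonneg (le_max_right _ _)]
      exact max_le (by linarith [le_abs_self k]) (abs_nonneg k)
    · refine Eventually.of_forall fun k => tendsto_const_nhds.congr' ?_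
      filter_upwards [eventually_ge_atTop k] with y hy
      rw [max_eq_right (by linarith)]
  simpa using this

noncomputable def rpot (m : Measure ℝ) (x : ℝ) : ℝ := ∫ k, max (x - k) 0 ∂m

lemma int_rpot {m : Measure ℝ} [IsFiniteMeasure m] (hm : Integrable (fun x : ℝ => x) m) (x : ℝ) :
    Integrable (fun k => max (x - k) 0) m :=
  ((integrable_const x).sub hm).sup (integrable_const 0)

lemma rpot_eq {m : Measure ℝ} [IsFiniteMeasure m] (hm : Integrable (fun x : ℝ => x) m) (x : ℝ) :
    rpot m x = pot m x + x * m.real univ - ∫ k, k ∂m := by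
  have : ∀ k : ℝ, max (x - k) 0 = max (k - x) 0 + (x - k) := by
    intro k
    rcases le_total x k with h | h
    · rw [max_eq_right (by linarith), max_eq_left (by linarith)]; ring
    · rw [max_eq_left (by linarith), max_eq_right (by linarith)]; ring
  have hi : Integrable (fun k => x - k) m := (integrable_const x).sub hm
  unfold rpot pot
  rw [integral_congr_ae (Eventually.of_forall this), integral_add (int_pot hm x) hi,
    integral_sub (integrable_const x) hm]
  simp; ring

lemma rpot_bot {m : Measure ℝ} [IsFiniteMeasure m] (hm : Integrable (fun x : ℝ => x) m) :
    Tendsto (rpot m) atBot (𝓝 0) := by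
  have : Tendsto (rpot m) atBot (𝓝 (∫ _, (0:ℝ) ∂m)) := by
    refine tendsto_integral_filter_of_dominated_convergence (fun k => |k|) ?_ ?_ hm.abs ?_
    · exact Eventually.of_forall fun y => (int_rpot hm y).aestronglyMeasurable
    · filter_upwards [eventually_le_atBot 0] with y hy
      refine Eventually.of_forall fun k => ?_
      rw [Real.norm_eq_abs, abs_of_nonneg (le_max_right _ _)]
      exact max_le (by linarith [neg_abs_le k]) (abs_nonneg k)
    · refine Eventually.of_forall fun k => tendsto_const_nhds.congr' ?_
      filter_upwards [eventually_le_atBot k] with y hy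
      rw [max_eq_right (by linarith)]
  simpa using this

/-- an affine function tending to zero at infinity is zero. -/
lemma affine_zero {c d : ℝ} (h : Tendsto (fun x : ℝ => d + c * x) atTop (𝓝 0)) :
    c = 0 ∧ d = 0 := by
  have h1 : Tendsto (fun x : ℝ => (d + c * (x + 1)) - (d + c * x)) atTop (𝓝 (0 - 0)) :=
    (h.comp (tendsto_atTop_add_const_right _ 1 tendsto_id)).sub h
  have hc : c = 0 := by
    have e : (fun x : ℝ => (d + c * (x + 1)) - (d + c * x)) = fun _ => c := by ext x; ring
    rw [e] at h1
    simpa using tendsto_nhds_unique tendsto_const_nhds h1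
  subst hc
  refine ⟨rfl, ?_⟩
  simp at h
  exact h

lemma affine_zero_bot {c d : ℝ} (h : Tendsto (fun x : ℝ => d + c * x) atBot (𝓝 0)) :
    c = 0 ∧ d = 0 := by
  have := h.comp tendsto_neg_atTop_atBot
  have h2 : Tendsto (fun x : ℝ => d + (-c) * x) atTop (𝓝 0) := by
    refine this.congr fun x => ?_
    simp
  have := affine_zero h2
  exact ⟨by linarith [this.1], this.2⟩

/-- `q` is the largest convex minorant of `h`. -/
def IsHull (q h : ℝ → ℝ) : Prop :=
  ConvexOn ℝ univ q ∧ (∀ x, q x ≤ h x) ∧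
    ∀ r : ℝ → ℝ, ConvexOn ℝ univ r → (∀ x, r x ≤ h x) → ∀ x, r x ≤ q x

lemma exists_hull {h r₀ : ℝ → ℝ} (hr₀ : ConvexOn ℝ univ r₀) (hle : ∀ x, r₀ x ≤ h x) :
    ∃ q, IsHull q h := by
  let S := {r : ℝ → ℝ // ConvexOn ℝ univ r ∧ ∀ x, r x ≤ h x}
  have : Nonempty S := ⟨⟨r₀, hr₀, hle⟩⟩
  have hb : ∀ x, BddAbove (range fun r : S => r.1 x) := fun x =>
    ⟨h x, by rintro _ ⟨r, rfl⟩; exact r.2.2 x⟩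
  refine ⟨fun x => ⨆ r : S, r.1 x, ⟨convex_univ, fun x _ y _ a b ha hb' hab => ?_⟩,
    fun x => ciSup_le fun r => r.2.2 x, fun r hr hrh x => le_ciSup (hb x) (⟨r, hr, hrh⟩ : S)⟩
  refine ciSup_le fun r => (r.2.1.2 (mem_univ x) (mem_univ y) ha hb' hab).trans ?_
  simp only [smul_eq_mul]
  exact add_le_add (mul_le_mul_of_nonneg_left (le_ciSup (hb x) r) ha)
    (mul_le_mul_of_nonneg_left (le_ciSup (hb y) r) hb')

lemma affine_convex (c d : ℝ) : ConvexOn ℝ univ (fun x : ℝ => d + c * x) := by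
  refine ⟨convex_univ, fun x _ y _ a b _ _ hab => le_of_eq ?_⟩
  have hb : b = 1 - a := by linarith
  subst hb
  simp only [smul_eq_mul]; ring

/-- Off the contact set the hull is midpoint-affine. -/
lemma hull_mid {h q : ℝ → ℝ} (hq : IsHull q h) (hh : Continuous h) {y : ℝ} (hy : q y < h y)
    {ρ : ℝ} (hρ : 0 < ρ) : ∃ δ, 0 < δ ∧ δ < ρ ∧ q (y - δ) + q (y + δ) ≤ 2 * q y := by
  have hc := cont_of_convex hq.1
  obtain ⟨c, hc1, hc2⟩ := exists_between hy
  have e1 : ∀ᶠ t in 𝓝 y, q t < c := hc.continuousAt.eventually_lt_const hc1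
  have e2 : ∀ᶠ t in 𝓝 y, c < h t := hh.continuousAt.eventually_const_lt hc2
  obtain ⟨ε, hε, hball⟩ := Metric.eventually_nhds_iff.1 (e1.and e2)
  obtain ⟨δ, hδ0, hδ⟩ := exists_between (lt_min hρ hε)
  have hδρ := hδ.trans_le (min_le_left _ _)
  have hδε := hδ.trans_le (min_le_right _ _)
  have hin : ∀ t, y - δ ≤ t → t ≤ y + δ → q t < c ∧ c < h t := fun t h1 h2 =>
    hball (by rw [Real.dist_eq, abs_lt]; constructor <;> linarith)
  refine ⟨δ, hδ0, hδρ, ?_⟩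
  have ha := (hin (y - δ) le_rfl (by linarith)).1
  have hb := (hin (y + δ) (by linarith) le_rfl).1
  set A := q (y - δ) with hA
  set B := q (y + δ) with hB
  set s := (B - A) / (2 * δ) with hs
  have hsB : s * (2 * δ) = B - A := by rw [hs]; field_simp
  have key := hq.2.2 (fun t => max (q t) ((A - s * (y - δ)) + s * t))
    (hq.1.sup (affine_convex _ _)) (fun t => max_le (hq.2.1 t) ?_) y
  · have := (le_max_right _ _).trans key
    nlinarith
  · by_cases h1 : y - δ ≤ t
    · by_cases h2 : t ≤ y + δ
      · refine le_of_lt (lt_trans ?_ (hin t h1 h2).2)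
        have : (A - s * (y - δ) + s * t) * (2 * δ) = A * (y + δ - t) + B * (t - (y - δ)) := by
          linear_combination (t - (y - δ)) * hsB
        have h3 : A * (y + δ - t) + B * (t - (y - δ)) < c * (2 * δ) := by
          rcases eq_or_lt_of_le h1 with h4 | h4
          · subst h4; nlinarith
          · nlinarith [mul_nonneg (sub_nonneg.2 ha.le) (sub_nonneg.2 h2),
              mul_pos (sub_pos.2 hb) (sub_pos.2 h4)]
        rw [← this] at h3
        exact lt_of_mul_lt_mul_right h3 (by linarith)
      · push Not at h2
        refine le_trans ?_ (hq.2.1 t)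
        have := hq.1.slope_mono_adjacent (mem_univ (y - δ)) (mem_univ t) (y := y + δ) (by linarith) h2
        rw [div_le_div_iff₀ (by linarith) (by linarith)] at this
        rw [← hA, ← hB] at this
        have : (A - s * (y - δ) + s * t) * (2 * δ) ≤ q t * (2 * δ) := by
          have e : (A - s * (y - δ) + s * t) * (2 * δ) = A * (2 * δ) + (B - A) * (t - (y - δ)) := by
            linear_combination (t - (y - δ)) * hsB
          rw [e]; nlinarith
        exact le_of_mul_le_mul_right this (by linarith)
    · push Not at h1
      refine le_trans ?_ (hq.2.1 t)
      have := hq.1.slope_mono_adjacent (mem_univ t) (mem_univ (y + δ)) (y := y - δ) h1 (by linarith)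
      rw [div_le_div_iff₀ (by linarith) (by linarith)] at this
      rw [← hA, ← hB] at this
      have : (A - s * (y - δ) + s * t) * (2 * δ) ≤ q t * (2 * δ) := by
        have e : (A - s * (y - δ) + s * t) * (2 * δ) = A * (2 * δ) + (B - A) * (t - (y - δ)) := by
          linear_combination (t - (y - δ)) * hsB
        rw [e]; nlinarith
      exact le_of_mul_le_mul_right this (by linarith)

/-- `f - conv (f - g)` is convex. -/
lemma hull_sub {f g q : ℝ → ℝ} (hf : ConvexOn ℝ univ f) (hg : ConvexOn ℝ univ g)
    (hq : IsHull q (fun x => f x - g x)) : ConvexOn ℝ univ (fun x => f x - q x) := by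
  have cf := cont_of_convex hf
  have cg := cont_of_convex hg
  have cq := cont_of_convex hq.1
  refine LinearOrder.convexOn_of_lt convex_univ fun x _ z _ hxz a b ha hb hab => ?_
  simp only [smul_eq_mul]
  by_contra hcon
  push Not at hcon
  set D : ℝ → ℝ := fun x => f x - q x with hD
  set s := (D z - D x) / (z - x) with hs
  have hsz : s * (z - x) = D z - D x := by rw [hs]; field_simp [sub_ne_zero.2 hxz.ne']
  set E : ℝ → ℝ := fun t => D t - (D x + s * (t - x)) with hE
  have cE : Continuous E := by simp only [hE, hD]; fun_prop
  have Ex : E x = 0 := by simp [hE]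
  have Ez : E z = 0 := by simp only [hE]; rw [hsz]; ring
  have hb' : b = 1 - a := by linarith
  set w := a * x + b * z with hw
  have hwI : w ∈ Icc x z := by
    constructor <;> rw [hw, hb'] <;> nlinarith
  have Ew : 0 < E w := by
    have : w - x = b * (z - x) := by rw [hw, hb']; ring
    simp only [hE]
    have e : s * (w - x) = b * (D z - D x) := by rw [this, ← hsz]; ring
    rw [e]
    have hcon' : a * D x + b * D z < D w := hcon
    rw [hb'] at hcon' ⊢
    linarith
  obtain ⟨y₀, hy₀, hmax₀⟩ := isCompact_Icc.exists_isMaxOn (nonempty_Icc.2 hxz.le) cE.continuousOn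
  set K := Icc x z ∩ {t | E t = E y₀} with hK
  have hKc : IsCompact K := isCompact_Icc.inter_right (isClosed_eq cE continuous_const)
  obtain ⟨y, ⟨hyI, hyE⟩, hyl⟩ := hKc.exists_isLeast ⟨y₀, hy₀, rfl⟩
  have hyE : E y = E y₀ := hyE
  have hmax : ∀ t ∈ Icc x z, E t ≤ E y := fun t ht => by rw [hyE]; exact hmax₀ ht
  have hypos : 0 < E y := Ew.trans_le (hmax w hwI)
  have hxy : x < y := lt_of_le_of_ne hyI.1 (by rintro rfl; linarith)
  have hyz : y < z := lt_of_le_of_ne hyI.2 (by rintro rfl; linarith)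
  have hqx := hq.2.1 x
  have hqz := hq.2.1 z
  rcases eq_or_lt_of_le (hq.2.1 y) with hy | hy
  · have h1 := hg.slope_mono_adjacent (mem_univ x) (mem_univ z) hxy hyz
    rw [div_le_div_iff₀ (by linarith) (by linarith)] at h1
    have h2 : g y = D x + s * (y - x) + E y := by simp only [hE, hD] at *; linarith
    have h3 : g x ≤ D x := by simp only [hD]; linarith
    have h4 : g z ≤ D x + s * (z - x) := by rw [hsz]; simp only [hD]; linarith
    rw [h2] at h1
    nlinarith [mul_pos hypos (sub_pos.2 hxz), mul_le_mul_of_nonneg_right h3 (sub_pos.2 hyz).le,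
      mul_le_mul_of_nonneg_right h4 (sub_pos.2 hxy).le]
  · obtain ⟨δ, hδ0, hδ, hmid⟩ := hull_mid hq (by fun_prop) hy
      (lt_min (sub_pos.2 hxy) (sub_pos.2 hyz))
    have hd1 := hδ.trans_le (min_le_left _ _)
    have hd2 := hδ.trans_le (min_le_right _ _)
    have hm : y - δ ∈ Icc x z := ⟨by linarith, by linarith⟩
    have hp : y + δ ∈ Icc x z := ⟨by linarith, by linarith⟩
    have h1 : E (y - δ) < E y := lt_of_le_of_ne (hmax _ hm) fun h => by
      have := hyl ⟨hm, h.trans hyE⟩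
      linarith
    have h2 := hmax _ hp
    have hfm := hf.2 (mem_univ (y - δ)) (mem_univ (y + δ)) (show (0:ℝ) ≤ 1/2 by norm_num)
      (show (0:ℝ) ≤ 1/2 by norm_num) (by norm_num)
    have : (1/2 : ℝ) • (y - δ) + (1/2 : ℝ) • (y + δ) = y := by simp only [smul_eq_mul]; ring
    rw [this] at hfm
    simp only [smul_eq_mul] at hfm
    simp only [hE, hD] at h1 h2
    linarith

instance (f : ℝ → ℝ) (hf : ConvexOn ℝ univ f) : IsLocallyFiniteMeasure (cm f hf) := by
  unfold cm; infer_instance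

lemma swap_pot {η m : Measure ℝ} [IsFiniteMeasure η] [IsFiniteMeasure m]
    (hη : Integrable (fun x : ℝ => x) η) (hm : Integrable (fun x : ℝ => x) m) :
    Integrable (pot m) η ∧ Integrable (rpot η) m ∧ ∫ x, pot m x ∂η = ∫ k, rpot η k ∂m := by
  have hi : Integrable (fun p : ℝ × ℝ => max (p.2 - p.1) 0) (η.prod m) :=
    ((hm.comp_snd η).sub (hη.comp_fst m)).sup (integrable_const 0)
  refine ⟨hi.integral_prod_left, hi.integral_prod_right, ?_⟩
  exact integral_integral_swap (f := fun x k => max (k - x) 0) hi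

/-- approximation of a convex function -/
noncomputable def apm (φ : ℝ → ℝ) (hφ : ConvexOn ℝ univ φ) (R : ℝ) : Measure ℝ :=
  (cm φ hφ).restrict (Ioc (-R) R)

instance (φ : ℝ → ℝ) (hφ : ConvexOn ℝ univ φ) (R : ℝ) : IsFiniteMeasure (apm φ hφ R) :=
  ⟨by unfold apm; rw [Measure.restrict_apply_univ]; exact measure_Ioc_lt_top⟩

lemma apm_int (φ : ℝ → ℝ) (hφ : ConvexOn ℝ univ φ) (R : ℝ) :
    Integrable (fun x : ℝ => x) (apm φ hφ R) :=
  (continuous_id (X := ℝ)).integrableOn_Ioc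

noncomputable def apx (φ : ℝ → ℝ) (hφ : ConvexOn ℝ univ φ) (R x : ℝ) : ℝ :=
  φ R + rd φ R * (x - R) + pot (apm φ hφ R) x

lemma apm_pot_ge (φ : ℝ → ℝ) (hφ : ConvexOn ℝ univ φ) {R x : ℝ} (hx : R ≤ x) :
    pot (apm φ hφ R) x = 0 := by
  unfold pot apm
  rw [setIntegral_congr_fun (g := fun _ => (0:ℝ)) measurableSet_Ioc]
  · simp
  · intro k hk
    exact max_eq_right (by linarith [hk.2])

lemma apm_real (φ : ℝ → ℝ) (hφ : ConvexOn ℝ univ φ) {R x : ℝ} (h1 : -R ≤ x) (h2 : x ≤ R) :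
    (apm φ hφ R).real (Ioi x) = rd φ R - rd φ x := by
  unfold apm
  rw [measureReal_restrict_apply measurableSet_Ioi]
  have : Ioi x ∩ Ioc (-R) R = Ioc x R := by
    ext k; simp only [mem_inter_iff, mem_Ioi, mem_Ioc]
    constructor
    · rintro ⟨a, b, c⟩; exact ⟨a, c⟩
    · rintro ⟨a, b⟩; exact ⟨a, by linarith, b⟩
  rw [this, Measure.real, cm_Ioc, ENNReal.toReal_ofReal (sub_nonneg.2 (rd_mono hφ h2))]

lemma apm_real_univ (φ : ℝ → ℝ) (hφ : ConvexOn ℝ univ φ) {R : ℝ} (h : 0 ≤ R) :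
    (apm φ hφ R).real univ = rd φ R - rd φ (-R) := by
  unfold apm
  rw [measureReal_restrict_apply_univ, Measure.real, cm_Ioc,
    ENNReal.toReal_ofReal (sub_nonneg.2 (rd_mono hφ (by linarith)))]

lemma apx_eq (φ : ℝ → ℝ) (hφ : ConvexOn ℝ univ φ) {R x : ℝ} (h1 : -R ≤ x) (h2 : x ≤ R) :
    apx φ hφ R x = φ x := by
  have hc : Continuous (fun x => φ x - pot (apm φ hφ R) x) :=
    (cont_of_convex hφ).sub (pot_cont (apm_int φ hφ R))
  have := affine_of_rd hc (c := rd φ R) (a := x) (b := R) (fun y hy => by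
    have := (hasRd hφ y).sub (pot_rd (apm_int φ hφ R) y)
    rw [apm_real φ hφ (h1.trans hy.1) hy.2.le,
      show rd φ y - -(rd φ R - rd φ y) = rd φ R by ring] at this
    exact this) R ⟨h2, le_rfl⟩
  simp only [apm_pot_ge φ hφ (le_refl R)] at this
  unfold apx
  linarith

lemma apx_bot (φ : ℝ → ℝ) (hφ : ConvexOn ℝ univ φ) {R x : ℝ} (hR : 0 ≤ R) (h1 : x ≤ -R) :
    apx φ hφ R x = φ (-R) + rd φ (-R) * (x + R) := by
  have e := apx_eq φ hφ (R := R) (x := -R) le_rfl (by linarith)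
  have hp : pot (apm φ hφ R) x = pot (apm φ hφ R) (-R) + (-R - x) * (apm φ hφ R).real univ := by
    have : ∀ y, y ≤ -R → pot (apm φ hφ R) y = ∫ k, (k - y) ∂(apm φ hφ R) := fun y hy => by
      unfold pot apm
      refine setIntegral_congr_fun measurableSet_Ioc fun k hk => ?_
      exact max_eq_left (by linarith [hk.1])
    rw [this x h1, this (-R) le_rfl, integral_sub (apm_int _ _ _) (integrable_const _),
      integral_sub (apm_int _ _ _) (integrable_const _)]
    simp; ring
  rw [apm_real_univ φ hφ hR] at hp
  unfold apx at e ⊢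
  rw [hp]
  linear_combination e

lemma apx_bounds (φ : ℝ → ℝ) (hφ : ConvexOn ℝ univ φ) {R : ℝ} (hR : 0 ≤ R) (x : ℝ) :
    φ 0 + rd φ 0 * x ≤ apx φ hφ R x ∧ apx φ hφ R x ≤ φ x := by
  have t0 := rd_le hφ 0 x
  by_cases h1 : -R ≤ x
  · by_cases h2 : x ≤ R
    · rw [apx_eq φ hφ h1 h2]; exact ⟨by linarith, le_rfl⟩
    · push Not at h2
      have e : apx φ hφ R x = φ R + rd φ R * (x - R) := by
        unfold apx; rw [apm_pot_ge φ hφ h2.le]; ring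
      rw [e]
      refine ⟨?_, rd_le hφ R x⟩
      have := rd_le hφ 0 R
      have := mul_le_mul_of_nonneg_right (rd_mono hφ hR) (sub_pos.2 h2).le
      linarith
  · push Not at h1
    rw [apx_bot φ hφ hR h1.le]
    constructor
    · have := rd_le hφ 0 (-R)
      have h3 : rd φ (-R) ≤ rd φ 0 := rd_mono hφ (by linarith)
      have := mul_le_mul_of_nonpos_right h3 (show x + R ≤ 0 by linarith)
      linarith
    · have := rd_le hφ (-R) x
      linarith

lemma apx_integral (φ : ℝ → ℝ) (hφ : ConvexOn ℝ univ φ) (R : ℝ) {η : Measure ℝ}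
    [IsFiniteMeasure η] (hη : Integrable (fun x : ℝ => x) η) :
    Integrable (apx φ hφ R) η ∧ ∫ x, apx φ hφ R x ∂η =
      (φ R - rd φ R * R) * η.real univ + rd φ R * (∫ x, x ∂η)
        + ∫ k, rpot η k ∂(apm φ hφ R) := by
  obtain ⟨h1, h2, h3⟩ := swap_pot hη (apm_int φ hφ R)
  have e : apx φ hφ R = fun x => ((φ R - rd φ R * R) + rd φ R * x) + pot (apm φ hφ R) x := by
    ext x; unfold apx; ring
  have i1 : Integrable (fun x => (φ R - rd φ R * R) + rd φ R * x) η :=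
    (integrable_const _).add (hη.const_mul _)
  rw [e]
  refine ⟨i1.add h1, ?_⟩
  rw [integral_add i1 h1, integral_add (integrable_const _) (hη.const_mul _), h3,
    integral_const_mul]
  simp [mul_comm]

lemma apx_tendsto (φ : ℝ → ℝ) (hφ : ConvexOn ℝ univ φ) {η : Measure ℝ}
    [IsFiniteMeasure η] (hη : Integrable (fun x : ℝ => x) η) (hi : Integrable φ η) :
    Tendsto (fun n : ℕ => ∫ x, apx φ hφ n x ∂η) atTop (𝓝 (∫ x, φ x ∂η)) := by
  have i0 : Integrable (fun x => φ 0 + rd φ 0 * x) η :=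
    (integrable_const _).add (hη.const_mul _)
  refine tendsto_integral_of_dominated_convergence (fun x => |φ x| + |φ 0 + rd φ 0 * x|)
    (fun n => (apx_integral φ hφ n hη).1.aestronglyMeasurable) (hi.abs.add i0.abs)
    (fun n => Eventually.of_forall fun x => ?_) (Eventually.of_forall fun x => ?_)
  · obtain ⟨h1, h2⟩ := apx_bounds φ hφ (R := n) (Nat.cast_nonneg n) x
    rw [Real.norm_eq_abs, abs_le]
    constructor
    · linarith [neg_abs_le (φ 0 + rd φ 0 * x), abs_nonneg (φ x)]
    · linarith [le_abs_self (φ x), abs_nonneg (φ 0 + rd φ 0 * x)]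
  · refine tendsto_const_nhds.congr' ?_
    obtain ⟨N, hN⟩ := exists_nat_ge |x|
    filter_upwards [eventually_ge_atTop N] with n hn
    have : |x| ≤ n := hN.trans (by exact_mod_cast hn)
    rw [abs_le] at this
    rw [apx_eq φ hφ this.1 this.2]

lemma order_of_pot {γ η : Measure ℝ} [IsFiniteMeasure γ] [IsFiniteMeasure η]
    (hγ : Integrable (fun x : ℝ => x) γ) (hη : Integrable (fun x : ℝ => x) η)
    (hmass : γ.real univ = η.real univ) (hmean : ∫ x, x ∂γ = ∫ x, x ∂η)
    (hp : ∀ x, pot γ x ≤ pot η x) : ConvexOrder γ η := by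
  intro φ hφ i1 i2
  refine le_of_tendsto_of_tendsto' (apx_tendsto φ hφ hγ i1) (apx_tendsto φ hφ hη i2) fun n => ?_
  rw [(apx_integral φ hφ n hγ).2, (apx_integral φ hφ n hη).2, hmass, hmean]
  refine add_le_add le_rfl ?_
  refine integral_mono (swap_pot hγ (apm_int φ hφ n)).2.1 (swap_pot hη (apm_int φ hφ n)).2.1 ?_
  intro k
  simp only [rpot_eq hγ, rpot_eq hη, hmass, hmean]
  linarith [hp k]

lemma ConvexOrder.facts {γ η : Measure ℝ} [IsFiniteMeasure γ] [IsFiniteMeasure η]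
    (hγ : Integrable (fun x : ℝ => x) γ) (hη : Integrable (fun x : ℝ => x) η)
    (h : ConvexOrder γ η) : γ.real univ = η.real univ ∧ ∫ x, x ∂γ = ∫ x, x ∂η ∧
      ∀ x, pot γ x ≤ pot η x := by
  refine ⟨le_antisymm ?_ ?_, le_antisymm ?_ ?_, fun x => ?_⟩
  · simpa using h (fun _ => 1) (convexOn_const 1 convex_univ) (integrable_const _)
      (integrable_const _)
  · simpa using h (fun _ => -1) (convexOn_const (-1) convex_univ) (integrable_const _)
      (integrable_const _)
  · exact h (fun x => x) (convexOn_id convex_univ) hγ hη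
  · have := h (fun x => -x) (by simpa using affine_convex (-1) 0) hγ.neg hη.neg
    rw [integral_neg, integral_neg] at this
    linarith
  · exact h (fun k => max (k - x) 0) (convex_max_right x) (int_pot hγ x) (int_pot hη x)

lemma shadow_hull {γ ν η : Measure ℝ} [IsFiniteMeasure γ] [IsFiniteMeasure ν] [IsFiniteMeasure η]
    (hγ : Integrable (fun x : ℝ => x) γ) (hν : Integrable (fun x : ℝ => x) ν)
    (hη : Integrable (fun x : ℝ => x) η) (h : IsShadow γ ν η) :
    IsHull (fun x => pot ν x - pot η x) (fun x => pot ν x - pot γ x) := by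
  obtain ⟨h1, h2, h3⟩ := h
  obtain ⟨m1, m2, m3⟩ := ConvexOrder.facts hγ hη h1
  have le1 : ∀ x, pot η x ≤ pot ν x := fun x =>
    integral_mono_measure h2 (Eventually.of_forall fun _ => le_max_right _ _) (int_pot hν x)
  have le2 : ∀ x, rpot η x ≤ rpot ν x := fun x =>
    integral_mono_measure h2 (Eventually.of_forall fun _ => le_max_right _ _) (int_rpot hν x)
  have le3 : ∀ x, rpot γ x ≤ rpot ν x := fun x => by
    refine le_trans ?_ (le2 x)
    rw [rpot_eq hγ, rpot_eq hη, m1, m2]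
    linarith [m3 x]
  have hnn : ∀ x, 0 ≤ pot ν x - pot γ x := fun x => by linarith [m3 x, le1 x]
  obtain ⟨q, hq⟩ := exists_hull (convexOn_const (0:ℝ) convex_univ) hnn
  have hp := hull_sub (pot_convex hν) (pot_convex hγ) hq
  set p : ℝ → ℝ := fun x => pot ν x - q x with hpdef
  have q0 : ∀ x, 0 ≤ q x := hq.2.2 _ (convexOn_const (0:ℝ) convex_univ) hnn
  have hsum := cm_add hp hq.1 (pot_convex hν) (fun x => by simp [hpdef])
  rw [cm_pot hν] at hsum
  set η' := cm p hp with hη'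
  have hle : η' ≤ ν := by rw [hsum]; exact Measure.le_add_right le_rfl
  have : IsFiniteMeasure η' := isFiniteMeasure_of_le ν hle
  have iη' : Integrable (fun x : ℝ => x) η' := hν.mono_measure hle
  have pγ : ∀ x, pot γ x ≤ p x := fun x => by
    have := hq.2.1 x
    simp only [hpdef]; linarith
  have pν : ∀ x, p x ≤ pot ν x := fun x => by
    have := q0 x
    simp only [hpdef]; linarith
  -- the difference of the potentials has constant right derivative
  have hinc : ∀ a b, a ≤ b → rd p a + η'.real (Ioi a) = rd p b + η'.real (Ioi b) := by
    intro a b hab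
    have e1 := real_Ioc (m := η') hab
    have e2 : η'.real (Ioc a b) = rd p b - rd p a := by
      rw [hη', Measure.real, cm_Ioc, ENNReal.toReal_ofReal (sub_nonneg.2 (rd_mono hp hab))]
    linarith
  have hconst : ∀ x, rd p x + η'.real (Ioi x) = rd p 0 + η'.real (Ioi 0) := fun x => by
    rcases le_total x 0 with hx | hx
    · exact hinc x 0 hx
    · exact (hinc 0 x hx).symm
  have haff := affine_of_rd_univ (D := fun x => p x - pot η' x)
    (c := rd p 0 + η'.real (Ioi 0)) ((cont_of_convex hp).sub (pot_cont iη')) (fun x => by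
      have := (hasRd hp x).sub (pot_rd iη' x)
      rw [sub_neg_eq_add, hconst x] at this
      exact this)
  have ptop : Tendsto p atTop (𝓝 0) :=
    tendsto_of_tendsto_of_tendsto_of_le_of_le tendsto_const_nhds (pot_top hν)
      (fun x => (pot_nonneg γ x).trans (pγ x)) pν
  have hz := affine_zero (((ptop.sub (pot_top iη')).congr haff).trans (by simp))
  have hpe : ∀ x, p x = pot η' x := fun x => by
    have := haff x
    rw [hz.1, hz.2] at this
    linarith
  -- behaviour at `-∞`
  have qlin := hq.2.2 _ (affine_convex (-(ν.real univ - γ.real univ)) ((∫ x, x ∂ν) - ∫ x, x ∂γ))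
    (fun x => by
      have := le3 x
      rw [rpot_eq hγ, rpot_eq hν] at this
      linarith)
  have pbot : Tendsto (fun x => p x + x * γ.real univ - ∫ x, x ∂γ) atBot (𝓝 0) := by
    refine tendsto_of_tendsto_of_tendsto_of_le_of_le (rpot_bot hγ) (rpot_bot hν)
      (fun x => ?_) (fun x => ?_)
    · simp only [rpot_eq hγ]; linarith [pγ x]
    · simp only [rpot_eq hν, hpdef]; linarith [qlin x]
  have hb2 : Tendsto (fun x : ℝ => ((∫ x, x ∂γ) - ∫ x, x ∂η') + (η'.real univ - γ.real univ) * x)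
      atBot (𝓝 0) := by
    have := (rpot_bot iη').sub pbot
    rw [sub_zero] at this
    refine this.congr fun x => ?_
    rw [rpot_eq iη', hpe x]; ring
  obtain ⟨k1, k2⟩ := affine_zero_bot hb2
  have ho : ConvexOrder γ η' := order_of_pot hγ iη' (by linarith) (by linarith)
    (fun x => by rw [← hpe]; exact pγ x)
  have hf := (ConvexOrder.facts hη iη' (h3 η' ho hle)).2.2
  have hconv : ConvexOn ℝ univ (fun x => pot ν x - pot η x) := by
    have hsub : ν - η + η = ν := Measure.sub_add_cancel_of_le h2
    have hs : ν - η ≤ ν := Measure.sub_le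
    have : IsFiniteMeasure (ν - η) := isFiniteMeasure_of_le ν hs
    have iσ : Integrable (fun x : ℝ => x) (ν - η) := hν.mono_measure hs
    have e : (fun x => pot ν x - pot η x) = pot (ν - η) := by
      ext x
      have := pot_add iσ hη x
      rw [hsub] at this
      linarith
    rw [e]
    exact pot_convex iσ
  have hge := hq.2.2 _ hconv (fun x => by linarith [m3 x])
  have : (fun x => pot ν x - pot η x) = q := by
    ext x
    refine le_antisymm (hge x) ?_
    have := hf x
    rw [← hpe] at this
    simp only [hpdef] at this
    linarith
  rw [this]
  exact hq

/-- Monotonicity of the shadow in the source measure. -/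
lemma shadow_mono {γ₁ γ ν η₁ η : Measure ℝ} [IsFiniteMeasure γ] [IsFiniteMeasure ν]
    (hγ : Integrable (fun x : ℝ => x) γ) (hν : Integrable (fun x : ℝ => x) ν)
    (hle : γ₁ ≤ γ) (h₁ : IsShadow γ₁ ν η₁) (h : IsShadow γ ν η) : η₁ ≤ η := by
  have : IsFiniteMeasure γ₁ := isFiniteMeasure_of_le γ hle
  have : IsFiniteMeasure η₁ := isFiniteMeasure_of_le ν h₁.2.1
  have : IsFiniteMeasure η := isFiniteMeasure_of_le ν h.2.1
  have : IsFiniteMeasure (γ - γ₁) := isFiniteMeasure_of_le γ Measure.sub_le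
  have i1 := hγ.mono_measure hle
  have i2 := hγ.mono_measure (Measure.sub_le : γ - γ₁ ≤ γ)
  have j1 := hν.mono_measure h₁.2.1
  have j := hν.mono_measure h.2.1
  have H1 := shadow_hull i1 hν j1 h₁
  have H := shadow_hull hγ hν j h
  have hadd : ∀ x, pot γ x = pot (γ - γ₁) x + pot γ₁ x := fun x => by
    rw [← pot_add i2 i1, Measure.sub_add_cancel_of_le hle]
  have K : IsHull (fun x => pot ν x - pot η x)
      (fun x => (pot ν x - pot η₁ x) - pot (γ - γ₁) x) := by
    refine ⟨H.1, fun x => ?_, fun r hr hrle => H.2.2 r hr fun x => ?_⟩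
    · have := H1.2.2 _ (H.1.add (pot_convex i2)) (fun x => by
        have := H.2.1 x
        simp only [Pi.add_apply]
        linarith [hadd x]) x
      simp only [Pi.add_apply] at this
      linarith
    · have a := hrle x
      have b := H1.2.1 x
      simp only at a b
      linarith [hadd x]
  have := hull_sub H1.1 (pot_convex i2) K
  refine le_of_pot j j1 ?_
  convert this using 2
  ring

end ShadowAux

/-- The shadow of a primitive curve is again a primitive curve: if `(μ_{[0,u]})` is
increasing with mass `u` and `μ_{[0,1]} = μ ≤_c ν`, then `ν_{[0,u]} = S^ν(μ_{[0,u]})`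
is increasing in `u` with mass `u`. -/
theorem shadow_curve_primitive (μ ν : Measure ℝ)
    [IsProbabilityMeasure μ] [IsProbabilityMeasure ν]
    (hμ : Integrable (fun x : ℝ => x) μ) (hν : Integrable (fun x : ℝ => x) ν)
    (hμν : ConvexOrder μ ν)
    (μc : ℝ → Measure ℝ)
    (hmono : ∀ u v : ℝ, 0 ≤ u → u ≤ v → v ≤ 1 → μc u ≤ μc v)
    (hmass : ∀ u ∈ Set.Icc (0:ℝ) 1, μc u Set.univ = ENNReal.ofReal u)
    (htop : μc 1 = μ)
    (νc : ℝ → Measure ℝ)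
    (hshadow : ∀ u ∈ Set.Icc (0:ℝ) 1, IsShadow (μc u) ν (νc u)) :
    (∀ u v : ℝ, 0 ≤ u → u ≤ v → v ≤ 1 → νc u ≤ νc v) ∧
      ∀ u ∈ Set.Icc (0:ℝ) 1, νc u Set.univ = ENNReal.ofReal u := by
  have hcle : ∀ u ∈ Set.Icc (0:ℝ) 1, μc u ≤ μ := fun u hu => by
    rw [← htop]; exact hmono u 1 hu.1 hu.2 le_rfl
  refine ⟨fun u v hu huv hv => ?_, fun u hu => ?_⟩
  · have hvI : v ∈ Set.Icc (0:ℝ) 1 := ⟨hu.trans huv, hv⟩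
    have : IsFiniteMeasure (μc v) := isFiniteMeasure_of_le μ (hcle v hvI)
    exact ShadowAux.shadow_mono (hμ.mono_measure (hcle v hvI)) hν (hmono u v hu huv hv)
      (hshadow u ⟨hu, huv.trans hv⟩) (hshadow v hvI)
  · have hs := hshadow u hu
    have : IsFiniteMeasure (μc u) := isFiniteMeasure_of_le μ (hcle u hu)
    have : IsFiniteMeasure (νc u) := isFiniteMeasure_of_le ν hs.2.1
    have := (ShadowAux.ConvexOrder.facts (hμ.mono_measure (hcle u hu))
      (hν.mono_measure hs.2.1) hs.1).1
    rw [← hmass u hu]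
    exact ((measureReal_eq_measureReal_iff).1 this).symm
end
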